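/- For every δ ∈ (0,1) there exists κ ∈ (0,1) (depending only on δ) such that the following holds. Let G = (V,E) be a finite simple graph with maximum degree at most Δ, where Δ ≥ 3 is an integer, let μ be the hardcore model on G with fugacities satisfying λ_v ≤ (1−δ)·λ_Δ for all v, and let θ = 1/10. Then for every probability distribution ν on 2^V supported on independent sets of G, D(ν P^{SS} P^{FD}_θ ‖ μ) ≤ (1−κ)·D(ν ‖ μ), where P^{SS} is one pass of the systematic scan for μ (with respect to any fixed enumeration of V) and P^{FD}_θ is the field dynamics for μ at parameter θ. -/

import Mathlib

/-!
A step of the field dynamics pins each occupied site independently with probability `1 - θ` and then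
draws the rest from its posterior distribution. The posterior kernel maps the law of the pinned set
under `μ` back to `μ`, so by data processing the relative entropy after the step is at most that of
the pinned sets. The single-site updates have the same form, with the noise kernel that forgets the
site `v`, so the systematic scan does not increase relative entropy. It remains to show that the
pinned sets carry at most the fraction `1 - θ ^ C` of the relative entropy, for some `C` depending
on `δ` only.

Run the pinning continuously, from survival probability `s = 1` down to `s = θ`. The rate at which
relative entropy is revealed is an average, over the sets `T` pinned so far, of divergences between
one-site marginals. *Entropic independence* bounds this rate by `C / s` times the relative entropy
not yet revealed, and integration gives the contraction.

Entropic independence is dual to the bound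

`Z(λ x) ≤ Z(λ) * exp (∑ i, p i * (x i ^ C - 1) / C)`

on the partition function, where `p i` is the probability that `i` is occupied; the models obtained
by pinning and tilting are again subcritical hardcore models. For `x = exp w` with `w` small, this
bound is a second-order Taylor estimate of `log Z`, whose second derivative is the variance of a
linear statistic and is bounded by spectral independence. The large values of `x` are clipped.

Spectral independence follows from a bound on the total influence of a vertex. Revealing its
neighbours one at a time gives a recursion for the influence with the same structure as on a tree,
without building the tree of self-avoiding walks, and below the uniqueness threshold this recursion
contracts for the potential `√p`.
-/

open Finset

noncomputable section
attribute [local instance] Classical.propDecidable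

/-- Push a distribution `ν` one step through a Markov transition matrix `P`. -/
def stepDist {Ω : Type*} [Fintype Ω] (ν : Ω → ℝ) (P : Ω → Ω → ℝ) : Ω → ℝ :=
  fun y => ∑ x, ν x * P x y

/-- KL divergence `D(ν‖μ) = Σ_x ν(x) log(ν(x)/μ(x))`. -/
def KLdiv {Ω : Type*} [Fintype Ω] (ν μ : Ω → ℝ) : ℝ :=
  ∑ x, ν x * Real.log (ν x / μ x)

variable {V : Type*} [Fintype V] [DecidableEq V]

/-- `σ` is an independent set of `G`: no two of its elements are adjacent. -/
def IndepSet (G : SimpleGraph V) (σ : Finset V) : Prop :=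
  ∀ u ∈ σ, ∀ w ∈ σ, ¬ G.Adj u w

/-- Unnormalized hardcore weight of `σ`: `∏_{v ∈ σ} λ_v` if `σ` is independent, else `0`. -/
def hcWeight (G : SimpleGraph V) (lam : V → ℝ) (σ : Finset V) : ℝ :=
  if IndepSet G σ then ∏ v ∈ σ, lam v else 0

/-- The hardcore model on `G` with fugacities `lam`, as a distribution on `Finset V`. -/
def hardcore (G : SimpleGraph V) (lam : V → ℝ) (σ : Finset V) : ℝ :=
  hcWeight G lam σ / ∑ τ : Finset V, hcWeight G lam τ

/-- The tree-uniqueness threshold `λ_Δ = (Δ−1)^{Δ−1}/(Δ−2)^Δ`. -/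
def hcCrit (Δ : ℕ) : ℝ := ((Δ : ℝ) - 1) ^ (Δ - 1) / ((Δ : ℝ) - 2) ^ Δ

/-- Glauber single-site update at `v`: resample the membership of `v` from the
conditional distribution of `μ` given the configuration on `V ∖ {v}`. -/
def siteUpdate (μ : Finset V → ℝ) (v : V) (σ τ : Finset V) : ℝ :=
  if τ.erase v = σ.erase v then
    μ τ / (μ (insert v (σ.erase v)) + μ (σ.erase v))
  else 0

/-- Push a distribution through the single-site updates along the list `l`
(one pass of the systematic scan when `l` enumerates `V`). -/
def scanDist (μ : Finset V → ℝ) (l : List V) (ν : Finset V → ℝ) : Finset V → ℝ :=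
  l.foldl (fun ρ v => stepDist ρ (siteUpdate μ v)) ν

/-- Unnormalized weight of the tilt `θ∗μ`: `(θ∗μ)(τ) ∝ θ^{|τ|} μ(τ)`. -/
def hcTiltWeight (θ : ℝ) (μ : Finset V → ℝ) (τ : Finset V) : ℝ :=
  θ ^ τ.card * μ τ

/-- The field dynamics at parameter `θ`: from state `σ`, pick `S ⊇ V ∖ σ` by keeping
each occupied site with probability `θ` (unoccupied sites always), then resample the
configuration on `S` from `θ∗μ` conditioned on all sites of `V ∖ S` being occupied. -/
def fieldDyn (θ : ℝ) (μ : Finset V → ℝ) (σ σ' : Finset V) : ℝ :=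
  ∑ S : Finset V,
    (if univ \ σ ⊆ S then θ ^ (S ∩ σ).card * (1 - θ) ^ (σ \ S).card else 0) *
      ((if univ \ S ⊆ σ' then hcTiltWeight θ μ σ' else 0) /
        ∑ τ ∈ univ.filter (fun τ : Finset V => univ \ S ⊆ τ), hcTiltWeight θ μ τ)

/-! ### Weighted means -/

section WeightedMean

variable {ι κ : Type*} (s : Finset ι) (a : ι → ℝ)

/-- The mean of `f` on `s` under the weights `a`, which need not be normalized. It is the
expectation of `f` under the Gibbs distribution proportional to `a`. -/
def wmean (f : ι → ℝ) : ℝ := (∑ i ∈ s, a i * f i) / ∑ i ∈ s, a i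

/-- The covariance of `f` and `g` on `s` under the weights `a`. -/
def wcov (f g : ι → ℝ) : ℝ := wmean s a (fun i => f i * g i) - wmean s a f * wmean s a g

lemma wcov_comm (f g : ι → ℝ) : wcov s a f g = wcov s a g f := by
  simp only [wcov, mul_comm]

variable {s a}

lemma wmean_congr {f g : ι → ℝ} (h : ∀ i ∈ s, f i = g i) : wmean s a f = wmean s a g := by
  rw [wmean, sum_congr rfl fun i hi => by rw [h i hi], wmean]

lemma wcov_congr {f f' g g' : ι → ℝ} (hf : ∀ i ∈ s, f i = f' i) (hg : ∀ i ∈ s, g i = g' i) :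
    wcov s a f g = wcov s a f' g' := by
  rw [wcov, wmean_congr hf, wmean_congr hg, wmean_congr fun i hi => by rw [hf i hi, hg i hi], wcov]

lemma wmean_nonneg {f : ι → ℝ} (ha : ∀ i ∈ s, 0 ≤ a i) (hf : ∀ i ∈ s, 0 ≤ f i) :
    0 ≤ wmean s a f :=
  div_nonneg (sum_nonneg fun i hi => mul_nonneg (ha i hi) (hf i hi)) (sum_nonneg ha)

lemma wmean_sum_mul (t : Finset κ) (c : κ → ℝ) (f : κ → ι → ℝ) :
    wmean s a (fun i => ∑ j ∈ t, c j * f j i) = ∑ j ∈ t, c j * wmean s a (f j) := by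
  simp only [wmean, mul_sum, mul_div_assoc', ← sum_div]
  rw [sum_comm]
  simp only [mul_left_comm]

lemma wcov_sum_mul_sum_mul (t : Finset κ) (c : κ → ℝ) (f : κ → ι → ℝ) :
    wcov s a (fun i => ∑ j ∈ t, c j * f j i) (fun i => ∑ j ∈ t, c j * f j i) =
      ∑ j ∈ t, ∑ k ∈ t, c j * c k * wcov s a (f j) (f k) := by
  have h_product : wmean s a (fun i => (∑ j ∈ t, c j * f j i) * ∑ k ∈ t, c k * f k i) =
      ∑ j ∈ t, ∑ k ∈ t, c j * c k * wmean s a (fun i => f j i * f k i) := by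
    have h_expand : (fun i => (∑ j ∈ t, c j * f j i) * ∑ k ∈ t, c k * f k i) =
        fun i => ∑ p ∈ t ×ˢ t, c p.1 * c p.2 * (f p.1 i * f p.2 i) := by
      funext i
      rw [sum_mul_sum, sum_product]
      exact sum_congr rfl fun j _ => sum_congr rfl fun k _ => by ring
    rw [h_expand, wmean_sum_mul (t ×ˢ t) (fun p => c p.1 * c p.2) fun p i => f p.1 i * f p.2 i,
      sum_product]
  rw [wcov, h_product, wmean_sum_mul, sum_mul_sum, ← sum_sub_distrib]
  refine sum_congr rfl fun j _ => ?_
  rw [← sum_sub_distrib]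
  exact sum_congr rfl fun k _ => by rw [wcov]; ring

end WeightedMean

lemma sum_sum_mul_le_of_row_sum_abs_le {ι : Type*} (s : Finset ι) (w b : ι → ℝ) (c : ι → ι → ℝ)
    (hc : ∀ i ∈ s, ∀ j ∈ s, c i j = c j i) (hb : ∀ i ∈ s, ∑ j ∈ s, |c i j| ≤ b i) :
    ∑ i ∈ s, ∑ j ∈ s, w i * w j * c i j ≤ ∑ i ∈ s, w i ^ 2 * b i := by
  have h_entry : ∀ i j, w i * w j * c i j ≤ w i ^ 2 * |c i j| / 2 + w j ^ 2 * |c i j| / 2 := by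
    intro i j
    have h_young : |w i * w j| ≤ (w i ^ 2 + w j ^ 2) / 2 :=
      abs_le.2 ⟨by linarith [sq_nonneg (w i + w j)], by linarith [sq_nonneg (w i - w j)]⟩
    calc w i * w j * c i j ≤ |w i * w j| * |c i j| := by rw [← abs_mul]; exact le_abs_self _
      _ ≤ (w i ^ 2 + w j ^ 2) / 2 * |c i j| := by gcongr
      _ = _ := by ring
  have h_swap : ∑ i ∈ s, ∑ j ∈ s, w j ^ 2 * |c i j| / 2 =
      ∑ i ∈ s, ∑ j ∈ s, w i ^ 2 * |c i j| / 2 := by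
    rw [sum_comm]
    exact sum_congr rfl fun i hi => sum_congr rfl fun j hj => by rw [hc j hj i hi]
  calc ∑ i ∈ s, ∑ j ∈ s, w i * w j * c i j
      ≤ ∑ i ∈ s, ∑ j ∈ s, (w i ^ 2 * |c i j| / 2 + w j ^ 2 * |c i j| / 2) :=
        sum_le_sum fun i _ => sum_le_sum fun j _ => h_entry i j
    _ = ∑ i ∈ s, w i ^ 2 * ∑ j ∈ s, |c i j| := by
        simp only [sum_add_distrib]
        rw [h_swap]
        simp only [mul_sum, ← sum_add_distrib, add_halves]
    _ ≤ ∑ i ∈ s, w i ^ 2 * b i := sum_le_sum fun i hi => by gcongr; exact hb i hi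

lemma monotoneOn_Icc_of_hasDerivAt_nonneg {f f' : ℝ → ℝ} {a b : ℝ}
    (hf : ∀ t ∈ Set.Icc a b, HasDerivAt f (f' t) t) (hf' : ∀ t ∈ Set.Icc a b, 0 ≤ f' t) :
    MonotoneOn f (Set.Icc a b) := by
  refine monotoneOn_of_deriv_nonneg (convex_Icc a b)
    (fun t ht => (hf t ht).continuousAt.continuousWithinAt)
    (fun t ht => (hf t (interior_subset ht)).differentiableAt.differentiableWithinAt) fun t ht => ?_
  rw [(hf t (interior_subset ht)).deriv]
  exact hf' t (interior_subset ht)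

/-- A Grönwall inequality: `f` has logarithmic derivative at most `C / t`. -/
lemma div_pow_le_div_pow_of_mul_hasDerivAt_le {f f' : ℝ → ℝ} {a b : ℝ} {C : ℕ} (ha : 0 < a)
    (hab : a ≤ b) (hf : ∀ t ∈ Set.Icc a b, HasDerivAt f (f' t) t)
    (hf' : ∀ t ∈ Set.Icc a b, t * f' t ≤ C * f t) : f b / b ^ C ≤ f a / a ^ C := by
  have h_mono : MonotoneOn (fun t => -(f t * t ^ (-C : ℤ))) (Set.Icc a b) := by
    refine monotoneOn_Icc_of_hasDerivAt_nonneg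
      (f' := fun t => t ^ (-C - 1 : ℤ) * (C * f t - t * f' t)) (fun t ht => ?_) fun t ht =>
        mul_nonneg (zpow_pos (ha.trans_le ht.1) _).le (sub_nonneg.2 (hf' t ht))
    have ht_ne : t ≠ 0 := (ha.trans_le ht.1).ne'
    have h_zpow := hasDerivAt_zpow (-C : ℤ) t (Or.inl ht_ne)
    refine ((hf t ht).mul h_zpow).neg.congr_deriv ?_
    rw [zpow_sub_one₀ ht_ne]
    push_cast
    field_simp
    ring
  have h_le := neg_le_neg_iff.1 (h_mono (Set.left_mem_Icc.2 hab) (Set.right_mem_Icc.2 hab) hab)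
  simpa only [zpow_neg, zpow_natCast, ← div_eq_mul_inv] using h_le

lemma le_taylor_two_of_hasDerivAt {f f' f'' : ℝ → ℝ} {B : ℝ}
    (hf : ∀ t ∈ Set.Icc (0 : ℝ) 1, HasDerivAt f (f' t) t)
    (hf' : ∀ t ∈ Set.Icc (0 : ℝ) 1, HasDerivAt f' (f'' t) t)
    (hB : ∀ t ∈ Set.Icc (0 : ℝ) 1, f'' t ≤ B) :
    f 1 ≤ f 0 + f' 0 + B / 2 := by
  have h_zero : (0 : ℝ) ∈ Set.Icc (0 : ℝ) 1 := Set.left_mem_Icc.2 zero_le_one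
  have h_one : (1 : ℝ) ∈ Set.Icc (0 : ℝ) 1 := Set.right_mem_Icc.2 zero_le_one
  have h_first : MonotoneOn (fun t => B * t - f' t) (Set.Icc 0 1) :=
    monotoneOn_Icc_of_hasDerivAt_nonneg (f' := fun t => B * 1 - f'' t)
      (fun t ht => ((hasDerivAt_id t).const_mul B).sub (hf' t ht))
      fun t ht => by linarith [hB t ht]
  have h_second : MonotoneOn (fun t => B * (t ^ 2 / 2) + t * f' 0 - f t) (Set.Icc 0 1) := by
    refine monotoneOn_Icc_of_hasDerivAt_nonneg (f' := fun t => B * t + 1 * f' 0 - f' t)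
      (fun t ht => ?_) fun t ht => by linarith [h_first h_zero ht ht.1]
    have h_sq : HasDerivAt (fun t : ℝ => t ^ 2 / 2) t t := by
      simpa using (hasDerivAt_pow 2 t).div_const 2
    exact ((h_sq.const_mul B).add ((hasDerivAt_id t).mul_const (f' 0))).sub (hf t ht)
  linarith [h_second h_zero h_one zero_le_one]

section LogLaplace

variable {ι : Type*} (s : Finset ι) (a x : ι → ℝ)

lemma hasDerivAt_sum_mul_exp (f : ι → ℝ) (t : ℝ) :
    HasDerivAt (fun t => ∑ i ∈ s, a i * Real.exp (t * x i) * f i)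
      (∑ i ∈ s, a i * Real.exp (t * x i) * (x i * f i)) t := by
  refine HasDerivAt.fun_sum fun i _ => ?_
  have h_exp : HasDerivAt (fun t => Real.exp (t * x i)) (Real.exp (t * x i) * (1 * x i)) t :=
    ((hasDerivAt_id t).mul_const (x i)).exp
  exact ((h_exp.const_mul (a i)).mul_const (f i)).congr_deriv (by ring)

variable {s a}

lemma hasDerivAt_log_sum_mul_exp {t : ℝ} (hpos : 0 < ∑ i ∈ s, a i * Real.exp (t * x i)) :
    HasDerivAt (fun t => Real.log (∑ i ∈ s, a i * Real.exp (t * x i)))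
      (wmean s (fun i => a i * Real.exp (t * x i)) x) t := by
  have h_sum := hasDerivAt_sum_mul_exp s a x 1 t
  simp only [Pi.one_apply, mul_one] at h_sum
  exact h_sum.log hpos.ne'

lemma hasDerivAt_wmean_mul_exp {t : ℝ} (hpos : 0 < ∑ i ∈ s, a i * Real.exp (t * x i)) :
    HasDerivAt (fun t => wmean s (fun i => a i * Real.exp (t * x i)) x)
      (wcov s (fun i => a i * Real.exp (t * x i)) x x) t := by
  have h_sum := hasDerivAt_sum_mul_exp s a x 1 t
  simp only [Pi.one_apply, mul_one] at h_sum
  refine ((hasDerivAt_sum_mul_exp s a x x t).div h_sum hpos.ne').congr_deriv ?_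
  rw [wcov, wmean, wmean]
  field_simp

lemma log_sum_mul_exp_le {B : ℝ} (hpos : ∀ t : ℝ, 0 < ∑ i ∈ s, a i * Real.exp (t * x i))
    (hB : ∀ t ∈ Set.Icc (0 : ℝ) 1, wcov s (fun i => a i * Real.exp (t * x i)) x x ≤ B) :
    Real.log (∑ i ∈ s, a i * Real.exp (x i)) ≤
      Real.log (∑ i ∈ s, a i) + wmean s a x + B / 2 := by
  simpa using le_taylor_two_of_hasDerivAt (fun t _ => hasDerivAt_log_sum_mul_exp x (hpos t))
    (fun t _ => hasDerivAt_wmean_mul_exp x (hpos t)) hB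

end LogLaplace

/-! ### Hardcore models on induced subgraphs -/

section InducedSubgraph

variable {α : Type*} [DecidableEq α]

/-- The partition function of the hardcore model on the induced subgraph `G[U]`. -/
def hcPartition (G : SimpleGraph α) (lam : α → ℝ) (U : Finset α) : ℝ :=
  ∑ σ ∈ U.powerset, hcWeight G lam σ

/-- The indicator that the site `u` is occupied, as a real-valued observable of configurations. -/
def occupied (u : α) (σ : Finset α) : ℝ := if u ∈ σ then 1 else 0

/-- The probability that `u` is occupied in the hardcore model on `G[U]`. -/
def occ (G : SimpleGraph α) (lam : α → ℝ) (U : Finset α) (u : α) : ℝ :=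
  wmean U.powerset (hcWeight G lam) (occupied u)

/-- The sites of `U` that are neither in `T` nor adjacent to `T`: those which are left undetermined
once the sites of `T` are known to be occupied. -/
def freeSites (G : SimpleGraph α) (U T : Finset α) : Finset α :=
  {u ∈ U | u ∉ T ∧ ∀ t ∈ T, ¬ G.Adj t u}

/-- The neighbours of `r` in `G[U]`. -/
def neighborsIn (G : SimpleGraph α) (U : Finset α) (r : α) : Finset α := {u ∈ U | G.Adj r u}

section Combinatorics

variable {G : SimpleGraph α} {U T : Finset α} {r u : α}

lemma mem_freeSites : u ∈ freeSites G U T ↔ u ∈ U ∧ u ∉ T ∧ ∀ t ∈ T, ¬ G.Adj t u :=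
  mem_filter

lemma mem_freeSites_singleton : u ∈ freeSites G U {r} ↔ u ∈ U ∧ u ≠ r ∧ ¬ G.Adj r u := by
  simp [mem_freeSites]

omit [DecidableEq α] in
lemma mem_neighborsIn : u ∈ neighborsIn G U r ↔ u ∈ U ∧ G.Adj r u := mem_filter

omit [DecidableEq α] in
lemma card_neighborsIn_le_degree [Fintype (G.neighborSet r)] :
    (neighborsIn G U r).card ≤ G.degree r :=
  card_le_card fun _ hu => (G.mem_neighborFinset r _).2 (mem_neighborsIn.1 hu).2

variable (G U r)

lemma freeSites_singleton_subset_erase : freeSites G U {r} ⊆ U.erase r := fun _ hu =>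
  have h := mem_freeSites_singleton.1 hu
  mem_erase.2 ⟨h.2.1, h.1⟩

lemma neighborsIn_subset_erase : neighborsIn G U r ⊆ U.erase r := fun _ hu =>
  have h := mem_neighborsIn.1 hu
  mem_erase.2 ⟨h.2.ne', h.1⟩

lemma erase_sdiff_neighborsIn : U.erase r \ neighborsIn G U r = freeSites G U {r} := by
  ext u
  simp only [mem_sdiff, mem_erase, mem_neighborsIn, mem_freeSites_singleton]
  tauto

lemma sdiff_insert_neighborsIn : U \ insert r (neighborsIn G U r) = freeSites G U {r} := by
  ext u
  simp only [mem_sdiff, mem_insert, mem_neighborsIn, mem_freeSites_singleton]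
  tauto

end Combinatorics

section Weight

lemma sum_eq_sum_mul_occupied {U σ : Finset α} (hσ : σ ⊆ U) (w : α → ℝ) :
    ∑ i ∈ σ, w i = ∑ i ∈ U, w i * occupied i σ := by
  simp only [occupied, mul_ite, mul_one, mul_zero]
  rw [sum_ite_mem, inter_eq_right.2 hσ]

variable (G : SimpleGraph α)

lemma indepSet_insert (r : α) (σ : Finset α) :
    IndepSet G (insert r σ) ↔ IndepSet G σ ∧ ∀ u ∈ σ, ¬ G.Adj r u := by
  simp only [IndepSet, forall_mem_insert, G.irrefl, not_false_eq_true, true_and, G.adj_comm _ r]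
  grind

lemma hcWeight_insert (lam : α → ℝ) {r : α} {σ : Finset α} (hr : r ∉ σ) :
    hcWeight G lam (insert r σ) =
      if ∀ u ∈ σ, ¬ G.Adj r u then lam r * hcWeight G lam σ else 0 := by
  simp only [hcWeight, indepSet_insert, prod_insert hr]
  split_ifs <;> simp_all

omit [DecidableEq α]

lemma hcWeight_empty (lam : α → ℝ) : hcWeight G lam ∅ = 1 := by simp [hcWeight, IndepSet]

lemma hcWeight_mul (lam x : α → ℝ) (σ : Finset α) :
    hcWeight G (fun v => lam v * x v) σ = hcWeight G lam σ * ∏ v ∈ σ, x v := by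
  simp only [hcWeight, prod_mul_distrib, ite_mul, zero_mul]

lemma hcWeight_mul_exp (lam w : α → ℝ) :
    hcWeight G (fun v => lam v * Real.exp (w v)) =
      fun σ => hcWeight G lam σ * Real.exp (∑ v ∈ σ, w v) := by
  simp only [funext_iff, hcWeight_mul, Real.exp_sum, implies_true]

lemma hcPartition_empty (lam : α → ℝ) : hcPartition G lam ∅ = 1 := by
  simp [hcPartition, hcWeight_empty]

variable {lam : α → ℝ} (hlam : ∀ v, 0 ≤ lam v)
include hlam

lemma hcWeight_nonneg (σ : Finset α) : 0 ≤ hcWeight G lam σ := by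
  unfold hcWeight
  split_ifs
  exacts [prod_nonneg fun v _ => hlam v, le_rfl]

lemma hcPartition_pos (U : Finset α) : 0 < hcPartition G lam U :=
  sum_pos' (fun σ _ => hcWeight_nonneg G hlam σ)
    ⟨∅, empty_mem_powerset U, by rw [hcWeight_empty]; exact one_pos⟩

lemma hcPartition_mono : Monotone (hcPartition G lam) := fun _ _ h =>
  sum_le_sum_of_subset_of_nonneg (powerset_mono.2 h) fun σ _ _ => hcWeight_nonneg G hlam σ

end Weight

section Recursion

variable (G : SimpleGraph α) (lam : α → ℝ) {U : Finset α} {r : α}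

lemma sum_powerset_hcWeight_mul (hr : r ∈ U) (f : Finset α → ℝ) :
    ∑ σ ∈ U.powerset, hcWeight G lam σ * f σ =
      ∑ σ ∈ (U.erase r).powerset, hcWeight G lam σ * f σ +
        lam r * ∑ σ ∈ (freeSites G U {r}).powerset, hcWeight G lam σ * f (insert r σ) := by
  have h_notMem : ∀ σ ∈ (U.erase r).powerset, r ∉ σ := fun σ hσ h =>
    notMem_erase r U (mem_powerset.1 hσ h)
  have h_free : (freeSites G U {r}).powerset =
      {σ ∈ (U.erase r).powerset | ∀ u ∈ σ, ¬ G.Adj r u} := by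
    ext σ
    simp only [mem_powerset, mem_filter, subset_iff, mem_freeSites_singleton, mem_erase]
    grind
  conv_lhs => rw [← insert_erase hr, sum_powerset_insert (notMem_erase r U)]
  congr 1
  rw [h_free, sum_filter, mul_sum]
  refine sum_congr rfl fun σ hσ => ?_
  rw [hcWeight_insert G lam (h_notMem σ hσ)]
  split_ifs <;> ring

lemma hcPartition_rec (hr : r ∈ U) :
    hcPartition G lam U =
      hcPartition G lam (U.erase r) + lam r * hcPartition G lam (freeSites G U {r}) := by
  unfold hcPartition
  simpa only [mul_one] using sum_powerset_hcWeight_mul G lam hr fun _ => 1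

lemma occ_of_notMem (hr : r ∉ U) : occ G lam U r = 0 := by
  have h_vacant : ∀ σ ∈ U.powerset, occupied r σ = 0 := fun σ hσ =>
    if_neg fun h => hr (mem_powerset.1 hσ h)
  rw [occ, wmean_congr h_vacant]
  simp [wmean]

lemma occ_eq_mul_div (hr : r ∈ U) :
    occ G lam U r = lam r * hcPartition G lam (freeSites G U {r}) / hcPartition G lam U := by
  have h_vacant : ∑ σ ∈ (U.erase r).powerset, hcWeight G lam σ * occupied r σ = 0 :=
    sum_eq_zero fun σ hσ => by
      rw [occupied, if_neg fun h => notMem_erase r U (mem_powerset.1 hσ h), mul_zero]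
  rw [occ, wmean, sum_powerset_hcWeight_mul G lam hr, h_vacant]
  simp [occupied, hcPartition]

variable {lam} (hlam : ∀ v, 0 ≤ lam v)
include hlam

lemma occ_nonneg (U : Finset α) (u : α) : 0 ≤ occ G lam U u :=
  wmean_nonneg (fun σ _ => hcWeight_nonneg G hlam σ) fun σ _ => by unfold occupied; positivity

lemma one_sub_occ (hr : r ∈ U) :
    1 - occ G lam U r = hcPartition G lam (U.erase r) / hcPartition G lam U := by
  have hZ := (hcPartition_pos G hlam U).ne'
  rw [occ_eq_mul_div G lam hr, eq_div_iff hZ, sub_mul, div_mul_cancel₀ _ hZ,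
    hcPartition_rec G lam hr]
  ring

lemma occ_lt_one (U : Finset α) (u : α) : occ G lam U u < 1 := by
  by_cases hu : u ∈ U
  · rw [← sub_pos, one_sub_occ G hlam hu]
    exact div_pos (hcPartition_pos G hlam _) (hcPartition_pos G hlam _)
  · rw [occ_of_notMem G lam hu]
    exact one_pos

lemma occ_le_fugacity (U : Finset α) (u : α) : occ G lam U u ≤ lam u := by
  by_cases hu : u ∈ U
  · rw [occ_eq_mul_div G lam hu, div_le_iff₀ (hcPartition_pos G hlam U)]
    exact mul_le_mul_of_nonneg_left (hcPartition_mono G hlam (filter_subset _ _)) (hlam u)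
  · rw [occ_of_notMem G lam hu]
    exact hlam u

lemma wmean_hcWeight_eq_condition (hr : r ∈ U) (f : Finset α → ℝ) :
    wmean U.powerset (hcWeight G lam) f =
      (1 - occ G lam U r) * wmean (U.erase r).powerset (hcWeight G lam) f +
        occ G lam U r *
          wmean (freeSites G U {r}).powerset (hcWeight G lam) (fun σ => f (insert r σ)) := by
  have hZ := hcPartition_pos G hlam U
  have h_vacant := hcPartition_pos G hlam (U.erase r)
  have h_occupied := hcPartition_pos G hlam (freeSites G U {r})
  rw [one_sub_occ G hlam hr, occ_eq_mul_div G lam hr, wmean, sum_powerset_hcWeight_mul G lam hr]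
  unfold wmean hcPartition at *
  field_simp

end Recursion

/-! ### Influences -/

/-- The influence of `r` on `u` in the hardcore model on `G[U]`: the probability that `u` is
occupied given that `r` is occupied, minus the same probability given that `r` is vacant. Since the
first mean is taken over `insert r σ`, the influence of `r` on itself is `1`. -/
def influence (G : SimpleGraph α) (lam : α → ℝ) (U : Finset α) (r u : α) : ℝ :=
  wmean (freeSites G U {r}).powerset (hcWeight G lam) (fun σ => occupied u (insert r σ)) -
    occ G lam (U.erase r) u

/-- The total absolute influence of `r` on the sites of `G[U]`: a row sum of the influence matrix of
spectral independence. -/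
def totalInfluence (G : SimpleGraph α) (lam : α → ℝ) (U : Finset α) (r : α) : ℝ :=
  ∑ u ∈ U, |influence G lam U r u|

section Influence

lemma totalInfluence_nonneg (G : SimpleGraph α) (lam : α → ℝ) (U : Finset α) (r : α) :
    0 ≤ totalInfluence G lam U r := sum_nonneg fun _ _ => abs_nonneg _

variable (G : SimpleGraph α) {lam : α → ℝ} (hlam : ∀ v, 0 ≤ lam v) {U : Finset α} {r : α}

lemma influence_of_ne {u : α} (hu : u ≠ r) :
    influence G lam U r u = occ G lam (freeSites G U {r}) u - occ G lam (U.erase r) u := by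
  simp only [influence, occ, occupied, mem_insert, hu, false_or]
  rfl

include hlam

lemma influence_self : influence G lam U r r = 1 := by
  have hZ := (hcPartition_pos G hlam (freeSites G U {r})).ne'
  simp only [influence, occ_of_notMem G lam (notMem_erase r U), occupied, mem_insert_self, if_true,
    wmean, mul_one, sub_zero]
  exact div_self hZ

lemma occ_erase_sub_occ (hr : r ∈ U) (u : α) :
    occ G lam (U.erase r) u - occ G lam U u = -(occ G lam U r * influence G lam U r u) := by
  have h_condition := wmean_hcWeight_eq_condition G hlam hr (occupied u)
  unfold influence
  rw [← occ, ← occ] at h_condition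
  linear_combination -h_condition

lemma wcov_occupied (hr : r ∈ U) (u : α) :
    wcov U.powerset (hcWeight G lam) (occupied r) (occupied u) =
      occ G lam U r * (1 - occ G lam U r) * influence G lam U r u := by
  have h_condition := wmean_hcWeight_eq_condition G hlam hr fun σ => occupied r σ * occupied u σ
  have h_vacant : wmean (U.erase r).powerset (hcWeight G lam) (fun σ => occupied r σ * occupied u σ)
      = 0 := by
    rw [wmean_congr (g := 0) fun σ hσ => ?_]
    · simp [wmean]
    · rw [occupied, if_neg fun h => notMem_erase r U (mem_powerset.1 hσ h), zero_mul, Pi.zero_apply]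
  have h_occupied : ∀ σ, occupied r (insert r σ) * occupied u (insert r σ) =
      occupied u (insert r σ) := fun σ => by
    simp [occupied]
  simp only [h_vacant, mul_zero, zero_add, h_occupied] at h_condition
  have h_difference := occ_erase_sub_occ G hlam hr u
  rw [wcov, h_condition, ← occ, ← occ]
  unfold influence at *
  linear_combination (occ G lam U r) * h_difference

lemma totalInfluence_eq_one_add (hr : r ∈ U) :
    totalInfluence G lam U r =
      1 + ∑ u ∈ U.erase r, |occ G lam (freeSites G U {r}) u - occ G lam (U.erase r) u| := by
  rw [totalInfluence, ← add_sum_erase U _ hr, influence_self G hlam, abs_one]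
  congr 1
  exact sum_congr rfl fun u hu => by rw [influence_of_ne G (ne_of_mem_erase hu)]

lemma sum_abs_occ_erase_sub_occ {W : Finset α} (hUW : U ⊆ W) (hr : r ∈ U) :
    ∑ u ∈ W, |occ G lam (U.erase r) u - occ G lam U u| =
      occ G lam U r * totalInfluence G lam U r := by
  rw [← sum_subset hUW fun u _ hu => by
      rw [occ_of_notMem G lam hu, occ_of_notMem G lam fun h => hu (mem_of_mem_erase h), sub_zero,
        abs_zero], totalInfluence, mul_sum]
  refine sum_congr rfl fun u _ => ?_
  rw [occ_erase_sub_occ G hlam hr, abs_neg, abs_mul, abs_of_nonneg (occ_nonneg G hlam _ _)]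

end Influence

end InducedSubgraph

/-! ### The uniqueness threshold -/

section Threshold

lemma hcCrit_add_two (m : ℕ) : hcCrit (m + 2) = ((m : ℝ) + 1) ^ (m + 1) / (m : ℝ) ^ (m + 2) := by
  unfold hcCrit
  push_cast
  congr 2 <;> ring

lemma hcCrit_add_two_mul_le {m : ℕ} (hm : 1 ≤ m) : hcCrit (m + 2) * m ≤ 8 := by
  have hm' : (0 : ℝ) < m := by exact_mod_cast hm
  have hm'' : (1 : ℝ) ≤ m := by exact_mod_cast hm
  have h_exp_two : Real.exp 2 ≤ 8 := by
    rw [show (2 : ℝ) = 1 + 1 by norm_num, Real.exp_add]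
    nlinarith [Real.exp_one_lt_d9, Real.exp_pos 1]
  calc hcCrit (m + 2) * m = (1 / (m : ℝ) + 1) ^ (m + 1) := by
        rw [hcCrit_add_two, div_add_one hm'.ne', div_pow, add_comm 1 (m : ℝ)]
        field_simp
        ring
    _ ≤ Real.exp (1 / m) ^ (m + 1) := by gcongr; exact Real.add_one_le_exp _
    _ = Real.exp (1 + 1 / m) := by
        rw [← Real.exp_nat_mul]
        congr 1
        push_cast
        field_simp
    _ ≤ Real.exp 2 := by
        gcongr
        linarith [(div_le_one hm').2 hm'']
    _ ≤ 8 := h_exp_two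

variable {Δ : ℕ} (hΔ : 3 ≤ Δ)
include hΔ

lemma hcCrit_pos : 0 < hcCrit Δ := by
  obtain ⟨m, rfl⟩ : ∃ m, Δ = m + 1 + 2 := ⟨Δ - 3, by omega⟩
  rw [hcCrit_add_two]
  positivity

lemma hcCrit_le_eight : hcCrit Δ ≤ 8 := by
  obtain ⟨m, rfl⟩ : ∃ m, Δ = m + 1 + 2 := ⟨Δ - 3, by omega⟩
  have h_mul := hcCrit_add_two_mul_le m.succ_pos
  push_cast at h_mul
  nlinarith [hcCrit_pos hΔ]

lemma hcCrit_mul_succ_le : hcCrit Δ * (Δ + 1) ≤ 32 := by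
  obtain ⟨m, rfl⟩ : ∃ m, Δ = m + 1 + 2 := ⟨Δ - 3, by omega⟩
  have h_mul := hcCrit_add_two_mul_le m.succ_pos
  have h_eight := hcCrit_le_eight hΔ
  push_cast at h_mul ⊢
  linarith

end Threshold

/-! ### Contraction of the tree recursion -/

section TreeRecursion

variable {ι : Type*} {A : Finset ι} {p : ι → ℝ}

lemma prod_one_sub_le {m : ℕ} (hm : 1 ≤ m) (hA : A.card ≤ m + 1) (hp : ∀ a ∈ A, p a ≤ 1) :
    ∏ a ∈ A, (1 - p a) ≤
      (m / (m + 1)) ^ (m + 1) * Real.exp ((m + 1) / m * (1 - ∑ a ∈ A, p a)) := by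
  have : (0 : ℝ) < m := by exact_mod_cast hm
  set c : ℝ := m / (m + 1) * Real.exp (1 / m)
  -- Equality holds at the critical value `x = 1 / (m + 1)`.
  have h_factor : ∀ x : ℝ, 1 - x ≤ c * Real.exp (-((m + 1) / m * x)) := fun x =>
    calc 1 - x = m / (m + 1) * (1 / (m : ℝ) + -((m + 1) / m * x) + 1) := by field_simp; ring
      _ ≤ m / (m + 1) * Real.exp (1 / (m : ℝ) + -((m + 1) / m * x)) := by
          gcongr; exact Real.add_one_le_exp _
      _ = c * Real.exp (-((m + 1) / m * x)) := by rw [Real.exp_add, mul_assoc]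
  have hc : 1 ≤ c := by simpa using h_factor 0
  calc ∏ a ∈ A, (1 - p a) ≤ ∏ a ∈ A, (c * Real.exp (-((m + 1) / m * p a))) :=
        prod_le_prod (fun a ha => sub_nonneg.2 (hp a ha)) fun a _ => h_factor (p a)
    _ = c ^ A.card * Real.exp (-((m + 1) / m * ∑ a ∈ A, p a)) := by
        rw [prod_mul_distrib, prod_const, ← Real.exp_sum, sum_neg_distrib, ← mul_sum]
    _ ≤ c ^ (m + 1) * Real.exp (-((m + 1) / m * ∑ a ∈ A, p a)) :=
        mul_le_mul_of_nonneg_right (pow_le_pow_right₀ hc hA) (Real.exp_pos _).le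
    _ = _ := by
        rw [mul_pow, mul_assoc, ← Real.exp_nat_mul, ← Real.exp_add]
        congr 2
        push_cast
        field_simp
        ring

lemma hcCrit_mul_prod_one_sub_mul_le {m : ℕ} (hm : 1 ≤ m) (hA : A.card ≤ m + 1)
    (hp : ∀ a ∈ A, p a ≤ 1) :
    hcCrit (m + 2) * (∏ a ∈ A, (1 - p a)) * ((m + 1) * ∑ a ∈ A, p a - 1) ≤ 1 := by
  have : (0 : ℝ) < m := by exact_mod_cast hm
  have h_crit : 0 < hcCrit (m + 2) := hcCrit_pos (by omega)
  have h_prod : 0 ≤ ∏ a ∈ A, (1 - p a) := prod_nonneg fun a ha => sub_nonneg.2 (hp a ha)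
  set P := ∑ a ∈ A, p a
  rcases le_total (((m : ℝ) + 1) * P - 1) 0 with h_neg | h_pos
  · linarith [mul_nonpos_of_nonneg_of_nonpos (mul_nonneg h_crit.le h_prod) h_neg]
  have h_tangent : ((m : ℝ) + 1) * P - 1 ≤ m * Real.exp (-((m + 1) / m * (1 - P))) :=
    calc ((m : ℝ) + 1) * P - 1 = m * (-((m + 1) / m * (1 - P)) + 1) := by field_simp; ring
      _ ≤ _ := by gcongr; exact Real.add_one_le_exp _
  calc hcCrit (m + 2) * (∏ a ∈ A, (1 - p a)) * ((m + 1) * P - 1)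
      ≤ hcCrit (m + 2) * ((m / (m + 1)) ^ (m + 1) * Real.exp ((m + 1) / m * (1 - P))) *
          (m * Real.exp (-((m + 1) / m * (1 - P)))) := by
        gcongr
        exact prod_one_sub_le hm hA hp
    _ = 1 := by
        rw [hcCrit_add_two, Real.exp_neg, div_pow]
        have := (Real.exp_pos ((m + 1) / m * (1 - P))).ne'
        field_simp
        ring

/-- With `R = lam * ∏ a ∈ A, (1 - p a)`, the map `p ↦ R / (1 + R)` is the tree recursion for
occupation probabilities, and the left side is its derivative for the potential `√p`. -/
lemma tree_contraction {Δ : ℕ} (hΔ : 3 ≤ Δ) (hA : A.card < Δ) (hp_nonneg : ∀ a ∈ A, 0 ≤ p a)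
    (hp_le : ∀ a ∈ A, p a ≤ 1) {δ lam : ℝ} (hδ : 0 ≤ δ) (hlam : 0 ≤ lam)
    (hle : lam ≤ (1 - δ) * hcCrit Δ) :
    √((lam * ∏ a ∈ A, (1 - p a)) / (1 + lam * ∏ a ∈ A, (1 - p a))) * ∑ a ∈ A, √(p a) ≤
      1 - δ / 18 := by
  obtain ⟨m, hm, rfl⟩ : ∃ m, 1 ≤ m ∧ Δ = m + 2 := ⟨Δ - 2, by omega, by omega⟩
  have h_crit := hcCrit_pos hΔ
  have hδ' : δ ≤ 1 := by
    by_contra! h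
    nlinarith
  set q := ∏ a ∈ A, (1 - p a)
  set P := ∑ a ∈ A, p a
  have hq : 0 ≤ q := prod_nonneg fun a ha => sub_nonneg.2 (hp_le a ha)
  have hq' : q ≤ 1 := prod_le_one (fun a ha => sub_nonneg.2 (hp_le a ha)) fun a ha => by
    linarith [hp_nonneg a ha]
  have hR : 0 ≤ lam * q := mul_nonneg hlam hq
  have hR' : lam * q ≤ 8 := by nlinarith [hcCrit_le_eight hΔ]
  have h_cauchy_schwarz : (∑ a ∈ A, √(p a)) ^ 2 ≤ (m + 1) * P :=
    calc (∑ a ∈ A, √(p a)) ^ 2 ≤ A.card * ∑ a ∈ A, √(p a) ^ 2 := sq_sum_le_card_mul_sum_sq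
      _ = A.card * P := by rw [sum_congr rfl fun a ha => Real.sq_sqrt (hp_nonneg a ha)]
      _ ≤ (m + 1) * P := by
          gcongr
          · exact sum_nonneg hp_nonneg
          · exact_mod_cast Nat.lt_succ_iff.1 hA
  have h_subcritical : lam * q * ((m + 1) * P - 1) ≤ 1 - δ := by
    have h := hcCrit_mul_prod_one_sub_mul_le hm (Nat.lt_succ_iff.1 hA) hp_le
    rcases le_total (((m : ℝ) + 1) * P - 1) 0 with h_neg | h_pos
    · linarith [mul_nonpos_of_nonneg_of_nonpos hR h_neg]
    · calc lam * q * ((m + 1) * P - 1) ≤ (1 - δ) * hcCrit (m + 2) * q * ((m + 1) * P - 1) := by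
            gcongr
        _ = (1 - δ) * (hcCrit (m + 2) * q * ((m + 1) * P - 1)) := by ring
        _ ≤ 1 - δ := mul_le_of_le_one_right (by linarith) h
  have h_square : lam * q / (1 + lam * q) * (∑ a ∈ A, √(p a)) ^ 2 ≤ 1 - δ / 9 := by
    rw [div_mul_eq_mul_div, div_le_iff₀ (by linarith)]
    nlinarith [mul_le_mul_of_nonneg_left h_cauchy_schwarz hR]
  refine (abs_le_of_sq_le_sq' ?_ (by linarith)).2
  rw [mul_pow, Real.sq_sqrt (by positivity)]
  nlinarith

end TreeRecursion

/-! ### Spectral independence -/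

section SpectralIndependence

variable {α : Type*} [DecidableEq α] {G : SimpleGraph α} {lam : α → ℝ} {U : Finset α} {r : α}

lemma exists_telescoping (hlam : ∀ v, 0 ≤ lam v) {A : Finset α} (hA : A ⊆ U) :
    ∃ W : α → Finset α, (∀ a ∈ A, a ∈ W a ∧ W a ⊆ U) ∧
      hcPartition G lam (U \ A) = hcPartition G lam U * ∏ a ∈ A, (1 - occ G lam (W a) a) ∧
      ∑ u ∈ U, |occ G lam (U \ A) u - occ G lam U u| ≤
        ∑ a ∈ A, occ G lam (W a) a * totalInfluence G lam (W a) a := by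
  induction A using Finset.induction_on with
  | empty => exact ⟨fun _ => U, by simp⟩
  | insert a A ha ih =>
    obtain ⟨W, hW, h_partition, h_occ⟩ := ih ((subset_insert a A).trans hA)
    have haU : a ∈ U \ A := mem_sdiff.2 ⟨hA (mem_insert_self a A), ha⟩
    have h_self : Function.update W a (U \ A) a = U \ A := Function.update_self ..
    have h_other : ∀ b ∈ A, Function.update W a (U \ A) b = W b := fun b hb =>
      Function.update_of_ne (ne_of_mem_of_not_mem hb ha) ..
    have h_sum : ∑ b ∈ A, occ G lam (Function.update W a (U \ A) b) b *
        totalInfluence G lam (Function.update W a (U \ A) b) b =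
          ∑ b ∈ A, occ G lam (W b) b * totalInfluence G lam (W b) b :=
      sum_congr rfl fun b hb => by rw [h_other b hb]
    refine ⟨Function.update W a (U \ A), ?_, ?_, ?_⟩
    · refine (forall_mem_insert ..).2 ⟨?_, fun b hb => ?_⟩
      · rw [h_self]
        exact ⟨haU, sdiff_subset⟩
      · rw [h_other b hb]
        exact hW b hb
    · have := (hcPartition_pos G hlam (U \ A)).ne'
      rw [prod_insert ha, h_self, prod_congr rfl fun b hb => by rw [h_other b hb],
        one_sub_occ G hlam haU, mul_left_comm, ← h_partition, sdiff_insert]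
      field_simp
    · rw [sum_insert ha, h_self, h_sum, sdiff_insert,
        ← sum_abs_occ_erase_sub_occ G hlam sdiff_subset haU]
      calc ∑ u ∈ U, |occ G lam ((U \ A).erase a) u - occ G lam U u|
          ≤ ∑ u ∈ U, (|occ G lam ((U \ A).erase a) u - occ G lam (U \ A) u| +
              |occ G lam (U \ A) u - occ G lam U u|) :=
            sum_le_sum fun u _ => abs_sub_le ..
        _ ≤ _ := by
            rw [sum_add_distrib]
            exact add_le_add_right h_occ _

lemma exists_influence_recursion (hlam : ∀ v, 0 ≤ lam v) (hr : r ∈ U) :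
    ∃ W : α → Finset α, (∀ a ∈ neighborsIn G U r, a ∈ W a ∧ W a ⊆ U.erase r) ∧
      occ G lam U r = (lam r * ∏ a ∈ neighborsIn G U r, (1 - occ G lam (W a) a)) /
        (1 + lam r * ∏ a ∈ neighborsIn G U r, (1 - occ G lam (W a) a)) ∧
      totalInfluence G lam U r ≤
        1 + ∑ a ∈ neighborsIn G U r, occ G lam (W a) a * totalInfluence G lam (W a) a := by
  obtain ⟨W, hW, h_partition, h_occ⟩ :=
    exists_telescoping (G := G) hlam (neighborsIn_subset_erase G U r)
  rw [erase_sdiff_neighborsIn] at h_partition h_occ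
  refine ⟨W, hW, ?_, ?_⟩
  · rw [occ_eq_mul_div G lam hr, hcPartition_rec G lam hr, h_partition, mul_left_comm,
      ← mul_one_add, mul_div_mul_left _ _ (hcPartition_pos G hlam _).ne']
  · rw [totalInfluence_eq_one_add G hlam hr]
    exact add_le_add_right h_occ 1

/-- Uniqueness with slack `δ` for the hardcore model on `G`: all degrees are at most `Δ` and all
fugacities are at most `(1 - δ) λ_Δ`. The degree bound is stated on finite induced subgraphs, so
that it needs no local finiteness. -/
structure IsSubcritical (G : SimpleGraph α) (lam : α → ℝ) (Δ : ℕ) (δ : ℝ) : Prop where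
  three_le : 3 ≤ Δ
  card_neighborsIn_le (U : Finset α) (v : α) : (neighborsIn G U v).card ≤ Δ
  slack_mem_Ioo : δ ∈ Set.Ioo (0 : ℝ) 1
  pos (v : α) : 0 < lam v
  le_mul_hcCrit (v : α) : lam v ≤ (1 - δ) * hcCrit Δ

namespace IsSubcritical

variable {Δ : ℕ} {δ : ℝ} (h : IsSubcritical G lam Δ δ)
include h

omit [DecidableEq α] in
lemma nonneg (v : α) : 0 ≤ lam v := (h.pos v).le

omit [DecidableEq α] in
lemma le_hcCrit (v : α) : lam v ≤ hcCrit Δ :=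
  (h.le_mul_hcCrit v).trans
    (mul_le_of_le_one_left (hcCrit_pos h.three_le).le (by linarith [h.slack_mem_Ioo.1]))

lemma sqrt_occ_le (U : Finset α) (v : α) : √(occ G lam U v) ≤ √(hcCrit Δ) :=
  Real.sqrt_le_sqrt ((occ_le_fugacity G h.nonneg U v).trans (h.le_hcCrit v))

lemma card_neighborsIn_lt {a : α} {W : Finset α} (ha : a ∈ neighborsIn G U r)
    (hW : W ⊆ U.erase r) : (neighborsIn G W a).card < Δ := by
  have h_adj : G.Adj a r := (mem_neighborsIn.1 ha).2.symm
  have hr : r ∉ neighborsIn G W a := fun h_mem =>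
    notMem_erase r U (hW (mem_neighborsIn.1 h_mem).1)
  have h_insert : insert r (neighborsIn G W a) ⊆ neighborsIn G (insert r W) a := by
    intro u hu
    rcases mem_insert.1 hu with rfl | hu
    · exact mem_neighborsIn.2 ⟨mem_insert_self _ _, h_adj⟩
    · exact mem_neighborsIn.2
        ⟨mem_insert_of_mem (mem_neighborsIn.1 hu).1, (mem_neighborsIn.1 hu).2⟩
  rw [← Nat.add_one_le_iff, ← card_insert_of_notMem hr]
  exact (card_le_card h_insert).trans (h.card_neighborsIn_le _ a)

lemma sqrt_occ_mul_totalInfluence_le (hr : r ∈ U) (h_card : (neighborsIn G U r).card < Δ) :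
    √(occ G lam U r) * totalInfluence G lam U r ≤ √(hcCrit Δ) * (18 / δ) := by
  induction U using Finset.strongInduction generalizing r with
  | H U ih =>
    have hδ := h.slack_mem_Ioo.1
    set M := √(hcCrit Δ) * (18 / δ) with hM
    obtain ⟨W, hW, h_occ, h_influence⟩ := exists_influence_recursion (G := G) h.nonneg hr
    have h_child : ∀ a ∈ neighborsIn G U r,
        occ G lam (W a) a * totalInfluence G lam (W a) a ≤ √(occ G lam (W a) a) * M := by
      intro a ha
      obtain ⟨haW, hWU⟩ := hW a ha
      have h_ih :=
        ih (W a) (hWU.trans_ssubset (erase_ssubset hr)) haW (h.card_neighborsIn_lt ha hWU)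
      rw [← Real.mul_self_sqrt (occ_nonneg G h.nonneg (W a) a), mul_assoc]
      simp only [Real.mul_self_sqrt (occ_nonneg G h.nonneg (W a) a)]
      gcongr
    have h_contract :
        √(occ G lam U r) * ∑ a ∈ neighborsIn G U r, √(occ G lam (W a) a) ≤ 1 - δ / 18 := by
      rw [h_occ]
      exact tree_contraction h.three_le h_card (fun a _ => occ_nonneg G h.nonneg _ _)
        (fun a _ => (occ_lt_one G h.nonneg _ _).le) hδ.le (h.nonneg r) (h.le_mul_hcCrit r)
    calc √(occ G lam U r) * totalInfluence G lam U r
        ≤ √(occ G lam U r) * (1 + ∑ a ∈ neighborsIn G U r, √(occ G lam (W a) a) * M) := by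
          gcongr
          exact h_influence.trans (add_le_add_right (sum_le_sum h_child) 1)
      _ = √(occ G lam U r) +
            √(occ G lam U r) * (∑ a ∈ neighborsIn G U r, √(occ G lam (W a) a)) * M := by
          rw [← sum_mul]
          ring
      _ ≤ √(hcCrit Δ) + (1 - δ / 18) * M :=
          add_le_add (h.sqrt_occ_le U r) (mul_le_mul_of_nonneg_right h_contract (by positivity))
      _ = M := by
          rw [hM]
          field_simp
          ring

lemma totalInfluence_le (hr : r ∈ U) : totalInfluence G lam U r ≤ 1 + 576 / δ := by
  have hδ := h.slack_mem_Ioo.1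
  have h_crit := hcCrit_pos h.three_le
  obtain ⟨W, hW, -, h_influence⟩ := exists_influence_recursion (G := G) h.nonneg hr
  have h_child : ∀ a ∈ neighborsIn G U r,
      occ G lam (W a) a * totalInfluence G lam (W a) a ≤ hcCrit Δ * (18 / δ) := by
    intro a ha
    obtain ⟨haW, hWU⟩ := hW a ha
    calc occ G lam (W a) a * totalInfluence G lam (W a) a
        = √(occ G lam (W a) a) * (√(occ G lam (W a) a) * totalInfluence G lam (W a) a) := by
          rw [← mul_assoc, Real.mul_self_sqrt (occ_nonneg G h.nonneg _ _)]
      _ ≤ √(hcCrit Δ) * (√(hcCrit Δ) * (18 / δ)) :=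
          mul_le_mul (h.sqrt_occ_le _ a)
            (h.sqrt_occ_mul_totalInfluence_le haW (h.card_neighborsIn_lt ha hWU))
            (mul_nonneg (Real.sqrt_nonneg _) (totalInfluence_nonneg ..)) (Real.sqrt_nonneg _)
      _ = hcCrit Δ * (18 / δ) := by rw [← mul_assoc, Real.mul_self_sqrt h_crit.le]
  have h_degree : ((neighborsIn G U r).card : ℝ) ≤ Δ + 1 := by
    have : ((neighborsIn G U r).card : ℝ) ≤ Δ := by exact_mod_cast h.card_neighborsIn_le U r
    linarith
  calc totalInfluence G lam U r
      ≤ 1 + (neighborsIn G U r).card * (hcCrit Δ * (18 / δ)) := by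
        rw [← nsmul_eq_mul]
        exact h_influence.trans (add_le_add_right (sum_le_card_nsmul _ _ _ h_child) 1)
    _ ≤ 1 + (Δ + 1) * (hcCrit Δ * (18 / δ)) := by gcongr
    _ = 1 + hcCrit Δ * (Δ + 1) * (18 / δ) := by ring
    _ ≤ 1 + 32 * (18 / δ) := by
        gcongr
        exact hcCrit_mul_succ_le h.three_le
    _ = 1 + 576 / δ := by ring

lemma wcov_sum_le (U : Finset α) (w : α → ℝ) :
    wcov U.powerset (hcWeight G lam) (fun σ => ∑ i ∈ σ, w i) (fun σ => ∑ i ∈ σ, w i) ≤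
      ∑ i ∈ U, w i ^ 2 * ((1 + 576 / δ) * occ G lam U i) := by
  have h_linear : ∀ σ ∈ U.powerset, ∑ i ∈ σ, w i = ∑ i ∈ U, w i * occupied i σ := fun σ hσ =>
    sum_eq_sum_mul_occupied (mem_powerset.1 hσ) w
  rw [wcov_congr h_linear h_linear, wcov_sum_mul_sum_mul]
  refine sum_sum_mul_le_of_row_sum_abs_le U w _ _ (fun i _ j _ => wcov_comm ..) fun i hi => ?_
  have h_occ := occ_nonneg G h.nonneg U i
  have h_vacant : 0 ≤ 1 - occ G lam U i := sub_nonneg.2 (occ_lt_one G h.nonneg U i).le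
  have := h.slack_mem_Ioo.1
  calc ∑ j ∈ U, |wcov U.powerset (hcWeight G lam) (occupied i) (occupied j)|
      = occ G lam U i * (1 - occ G lam U i) * totalInfluence G lam U i := by
        rw [totalInfluence, mul_sum]
        refine sum_congr rfl fun j _ => ?_
        rw [wcov_occupied G h.nonneg hi, abs_mul, abs_of_nonneg (mul_nonneg h_occ h_vacant)]
    _ ≤ occ G lam U i * 1 * (1 + 576 / δ) := by
        gcongr
        · exact totalInfluence_nonneg ..
        · linarith
        · exact h.totalInfluence_le hi
    _ = (1 + 576 / δ) * occ G lam U i := by ring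

end IsSubcritical

end SpectralIndependence

/-! ### The generating-function inequality -/

section Comparison

variable {α : Type*} (G : SimpleGraph α) {lam lam' : α → ℝ} (hlam : ∀ v, 0 ≤ lam v)
include hlam

-- This reflects that `log Z` is `1`-Lipschitz in each fugacity.
lemma hcPartition_le_mul_exp (hlam' : ∀ v, 0 ≤ lam' v) (U : Finset α) :
    hcPartition G lam' U ≤
      hcPartition G lam U * Real.exp (∑ v ∈ U, max 0 (lam' v - lam v)) := by
  classical
  induction U using Finset.strongInduction with
  | H U ih =>
    rcases U.eq_empty_or_nonempty with rfl | ⟨r, hr⟩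
    · simp [hcPartition_empty]
    set E := Real.exp (∑ v ∈ U.erase r, max 0 (lam' v - lam v)) with hE
    set d := max 0 (lam' r - lam r)
    have hd_nonneg : 0 ≤ d := le_max_left ..
    have h_fugacity : lam' r ≤ lam r + d := by linarith [le_max_right 0 (lam' r - lam r)]
    have h_free_subset := freeSites_singleton_subset_erase G U r
    have h_vacant : hcPartition G lam' (U.erase r) ≤ hcPartition G lam (U.erase r) * E :=
      ih _ (erase_ssubset hr)
    have h_occupied : hcPartition G lam' (freeSites G U {r}) ≤
        hcPartition G lam (freeSites G U {r}) * E := by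
      refine (ih _ (h_free_subset.trans_ssubset (erase_ssubset hr))).trans ?_
      have := (hcPartition_pos G hlam (freeSites G U {r})).le
      gcongr
      exact Real.exp_le_exp.2
        (sum_le_sum_of_subset_of_nonneg h_free_subset fun _ _ _ => le_max_left 0 _)
    have h_mono : hcPartition G lam (freeSites G U {r}) ≤ hcPartition G lam U :=
      hcPartition_mono G hlam (h_free_subset.trans (erase_subset r U))
    calc hcPartition G lam' U
        = hcPartition G lam' (U.erase r) + lam' r * hcPartition G lam' (freeSites G U {r}) :=
          hcPartition_rec G lam' hr
      _ ≤ hcPartition G lam (U.erase r) * E +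
            (lam r + d) * (hcPartition G lam (freeSites G U {r}) * E) :=
          add_le_add h_vacant (mul_le_mul h_fugacity h_occupied (hcPartition_pos G hlam' _).le
            (add_nonneg (hlam r) hd_nonneg))
      _ = (hcPartition G lam U + d * hcPartition G lam (freeSites G U {r})) * E := by
          rw [hcPartition_rec G lam hr]
          ring
      _ ≤ hcPartition G lam U * (d + 1) * E := by
          gcongr
          linarith [mul_le_mul_of_nonneg_left h_mono hd_nonneg]
      _ ≤ hcPartition G lam U * Real.exp d * E := by
          have := (hcPartition_pos G hlam U).le
          gcongr
          exact Real.add_one_le_exp d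
      _ = _ := by rw [mul_assoc, hE, ← Real.exp_add, ← add_sum_erase U _ hr]

lemma hcPartition_le_sdiff_mul_exp [DecidableEq α] {U A : Finset α} (hA : A ⊆ U) :
    hcPartition G lam U ≤ hcPartition G lam (U \ A) * Real.exp (∑ v ∈ A, lam v) := by
  induction A using Finset.induction_on with
  | empty => simp
  | insert a A ha ih =>
    have haU : a ∈ U \ A := mem_sdiff.2 ⟨hA (mem_insert_self a A), ha⟩
    have h_mono := hcPartition_mono G hlam (freeSites_singleton_subset_erase G (U \ A) a)
    have h_erase : hcPartition G lam (U \ A) ≤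
        hcPartition G lam ((U \ A).erase a) * Real.exp (lam a) :=
      calc hcPartition G lam (U \ A)
          = hcPartition G lam ((U \ A).erase a) +
              lam a * hcPartition G lam (freeSites G (U \ A) {a}) := hcPartition_rec G lam haU
        _ ≤ hcPartition G lam ((U \ A).erase a) * (lam a + 1) := by
            linarith [mul_le_mul_of_nonneg_left h_mono (hlam a)]
        _ ≤ _ := by
            have := (hcPartition_pos G hlam ((U \ A).erase a)).le
            gcongr
            exact Real.add_one_le_exp (lam a)
    rw [sdiff_insert, sum_insert ha, Real.exp_add, ← mul_assoc]
    exact (ih ((subset_insert a A).trans hA)).trans (by gcongr)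

end Comparison

lemma wmean_sum_hcWeight {α : Type*} [DecidableEq α] (G : SimpleGraph α) (lam : α → ℝ)
    (U : Finset α) (w : α → ℝ) :
    wmean U.powerset (hcWeight G lam) (fun σ => ∑ i ∈ σ, w i) =
      ∑ i ∈ U, w i * occ G lam U i := by
  rw [wmean_congr fun σ hσ => sum_eq_sum_mul_occupied (mem_powerset.1 hσ) w, wmean_sum_mul]
  rfl

/-- The constant of the second-order bound on `log Z` at fugacities with slack `δ`: the variance
constant `1 + 576 / (δ / 2)` for slack `δ / 2`, times the loss `exp 33` in comparing occupation
probabilities. -/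
def curvatureBound (δ : ℝ) : ℝ := (1 + 1152 / δ) * Real.exp 33

/-- The exponent of the generating-function form of entropic independence for slack `δ`, a natural
number so that it can be used in `x ^ C` for `x = 0`. -/
def entropicExponent (δ : ℝ) : ℕ := ⌈1 + 32 * curvatureBound δ⌉₊

lemma le_entropicExponent (δ : ℝ) : 1 + 32 * curvatureBound δ ≤ entropicExponent δ :=
  Nat.le_ceil _

section CurvatureBound

variable {δ : ℝ} (hδ : 0 < δ)
include hδ

lemma one_add_le_curvatureBound : 1 + 1152 / δ ≤ curvatureBound δ :=
  le_mul_of_one_le_right (by positivity) (Real.one_le_exp (by norm_num))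

lemma one_le_curvatureBound : 1 ≤ curvatureBound δ :=
  (le_add_of_nonneg_right (by positivity)).trans (one_add_le_curvatureBound hδ)

lemma one_div_curvatureBound_le : 1 / curvatureBound δ ≤ δ / 4 := by
  have h_pos := one_le_curvatureBound hδ
  have h_div : δ / 4 * (1152 / δ) = 288 := by
    field_simp
    norm_num
  rw [div_le_iff₀ (by linarith)]
  nlinarith [one_add_le_curvatureBound hδ]

lemma entropicExponent_pos : 0 < entropicExponent δ := by
  have h : (0 : ℝ) < entropicExponent δ := by
    linarith [one_le_curvatureBound hδ, le_entropicExponent δ]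
  exact_mod_cast h

end CurvatureBound

namespace IsSubcritical

variable {α : Type*} {G : SimpleGraph α} {lam : α → ℝ} {Δ : ℕ} {δ : ℝ}
  (h : IsSubcritical G lam Δ δ)
include h

lemma tilt {w : α → ℝ} (hw : ∀ v, w v ≤ δ / 4) :
    IsSubcritical G (fun v => lam v * Real.exp (w v)) Δ (δ / 2) where
  three_le := h.three_le
  card_neighborsIn_le := h.card_neighborsIn_le
  slack_mem_Ioo := ⟨half_pos h.slack_mem_Ioo.1, by linarith [h.slack_mem_Ioo.1, h.slack_mem_Ioo.2]⟩
  pos v := mul_pos (h.pos v) (Real.exp_pos _)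
  le_mul_hcCrit v := by
    obtain ⟨hδ, hδ'⟩ := h.slack_mem_Ioo
    have h_exp : Real.exp (w v) ≤ 1 + δ / 2 := by
      have h_inv : Real.exp (δ / 4) * Real.exp (-(δ / 4)) = 1 := by
        rw [← Real.exp_add, add_neg_cancel, Real.exp_zero]
      have h_quarter : Real.exp (δ / 4) ≤ 1 + δ / 2 := by
        nlinarith [Real.add_one_le_exp (-(δ / 4)), Real.exp_pos (δ / 4)]
      exact (Real.exp_le_exp.2 (hw v)).trans h_quarter
    have h_crit := hcCrit_pos h.three_le
    calc lam v * Real.exp (w v) ≤ (1 - δ) * hcCrit Δ * (1 + δ / 2) :=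
          mul_le_mul (h.le_mul_hcCrit v) h_exp (Real.exp_pos _).le
            (mul_nonneg (by linarith) h_crit.le)
      _ = (1 - δ) * (1 + δ / 2) * hcCrit Δ := by ring
      _ ≤ (1 - δ / 2) * hcCrit Δ := by
          gcongr
          nlinarith

variable [DecidableEq α]

lemma fugacity_le_exp_mul_occ {U : Finset α} {r : α} (hr : r ∈ U) :
    lam r ≤ Real.exp 32 * occ G lam U r := by
  have h_subset : insert r (neighborsIn G U r) ⊆ U :=
    insert_subset hr ((neighborsIn_subset_erase G U r).trans (erase_subset r U))
  have h_card : ((insert r (neighborsIn G U r)).card : ℝ) ≤ Δ + 1 := by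
    exact_mod_cast (card_insert_le _ _).trans (Nat.succ_le_succ (h.card_neighborsIn_le U r))
  have h_sum : ∑ v ∈ insert r (neighborsIn G U r), lam v ≤ 32 :=
    calc ∑ v ∈ insert r (neighborsIn G U r), lam v
        ≤ (insert r (neighborsIn G U r)).card * hcCrit Δ := by
          rw [← nsmul_eq_mul]
          exact sum_le_card_nsmul _ _ _ fun v _ => h.le_hcCrit v
      _ ≤ (Δ + 1) * hcCrit Δ := mul_le_mul_of_nonneg_right h_card (hcCrit_pos h.three_le).le
      _ ≤ 32 := by
          rw [mul_comm]
          exact hcCrit_mul_succ_le h.three_le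
  have h_partition : hcPartition G lam U ≤ hcPartition G lam (freeSites G U {r}) * Real.exp 32 := by
    refine (hcPartition_le_sdiff_mul_exp G h.nonneg h_subset).trans ?_
    rw [sdiff_insert_neighborsIn]
    exact mul_le_mul_of_nonneg_left (Real.exp_le_exp.2 h_sum) (hcPartition_pos G h.nonneg _).le
  rw [occ_eq_mul_div G lam hr, mul_div_assoc', le_div_iff₀ (hcPartition_pos G h.nonneg U)]
  linarith [mul_le_mul_of_nonneg_left h_partition (h.nonneg r)]

lemma occ_tilt_le {U : Finset α} {w : α → ℝ} {i : α} (hi : i ∈ U) (hw : w i ≤ 1) :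
    occ G (fun v => lam v * Real.exp (w v)) U i ≤ Real.exp 33 * occ G lam U i :=
  calc occ G (fun v => lam v * Real.exp (w v)) U i ≤ lam i * Real.exp (w i) :=
        occ_le_fugacity G (fun v => mul_nonneg (h.nonneg v) (Real.exp_pos _).le) U i
    _ ≤ Real.exp 32 * occ G lam U i * Real.exp 1 :=
        mul_le_mul (h.fugacity_le_exp_mul_occ hi) (Real.exp_le_exp.2 hw) (Real.exp_pos _).le
          (mul_nonneg (Real.exp_pos _).le (occ_nonneg G h.nonneg U i))
    _ = Real.exp (32 + 1) * occ G lam U i := by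
        rw [Real.exp_add]
        ring
    _ = Real.exp 33 * occ G lam U i := by norm_num

lemma wcov_tilt_le (U : Finset α) {w : α → ℝ} (hw : ∀ v, w v ≤ δ / 4) (x : α → ℝ) :
    wcov U.powerset (hcWeight G fun v => lam v * Real.exp (w v)) (fun σ => ∑ i ∈ σ, x i)
        (fun σ => ∑ i ∈ σ, x i) ≤
      ∑ i ∈ U, occ G lam U i * (curvatureBound δ * x i ^ 2) := by
  obtain ⟨hδ, hδ'⟩ := h.slack_mem_Ioo
  refine ((h.tilt hw).wcov_sum_le U x).trans (sum_le_sum fun i hi => ?_)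
  have h_occ := h.occ_tilt_le hi ((hw i).trans (by linarith))
  calc x i ^ 2 * ((1 + 576 / (δ / 2)) * occ G (fun v => lam v * Real.exp (w v)) U i)
      ≤ x i ^ 2 * ((1 + 576 / (δ / 2)) * (Real.exp 33 * occ G lam U i)) := by gcongr
    _ = occ G lam U i * (curvatureBound δ * x i ^ 2) := by
        rw [curvatureBound, show 576 / (δ / 2) = 1152 / δ by field_simp; norm_num]
        ring

lemma log_hcPartition_tilt_le (U : Finset α) {w : α → ℝ} (hw : ∀ v, |w v| ≤ δ / 4) :
    Real.log (hcPartition G (fun v => lam v * Real.exp (w v)) U) ≤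
      Real.log (hcPartition G lam U) +
        ∑ i ∈ U, occ G lam U i * (w i + curvatureBound δ / 2 * w i ^ 2) := by
  have h_tilt : ∀ t : ℝ, (fun σ => hcWeight G lam σ * Real.exp (t * ∑ i ∈ σ, w i)) =
      hcWeight G fun v => lam v * Real.exp (t * w v) := fun t => by
    simp only [hcWeight_mul_exp, mul_sum]
  have h_pos : ∀ t : ℝ, 0 < ∑ σ ∈ U.powerset, hcWeight G lam σ * Real.exp (t * ∑ i ∈ σ, w i) :=
    fun t => by
      rw [sum_congr rfl fun σ _ => congrFun (h_tilt t) σ]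
      exact hcPartition_pos G (fun v => mul_nonneg (h.nonneg v) (Real.exp_pos _).le) U
  have h_variance : ∀ t ∈ Set.Icc (0 : ℝ) 1,
      wcov U.powerset (fun σ => hcWeight G lam σ * Real.exp (t * ∑ i ∈ σ, w i))
        (fun σ => ∑ i ∈ σ, w i) (fun σ => ∑ i ∈ σ, w i) ≤
      ∑ i ∈ U, occ G lam U i * (curvatureBound δ * w i ^ 2) := fun t ht => by
    rw [h_tilt]
    refine h.wcov_tilt_le U (fun v => ?_) w
    calc t * w v ≤ |t * w v| := le_abs_self _
      _ = t * |w v| := by rw [abs_mul, abs_of_nonneg ht.1]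
      _ ≤ 1 * |w v| := mul_le_mul_of_nonneg_right ht.2 (abs_nonneg _)
      _ ≤ δ / 4 := by rw [one_mul]; exact hw v
  have h_taylor := log_sum_mul_exp_le _ h_pos h_variance
  rw [wmean_sum_hcWeight, add_assoc, sum_div, ← sum_add_distrib] at h_taylor
  rw [hcPartition, hcWeight_mul_exp]
  refine h_taylor.trans_eq ?_
  rw [hcPartition]
  congr 1
  exact sum_congr rfl fun i _ => by ring

end IsSubcritical

section Clipping

variable {Q : ℝ} {C : ℕ}

lemma add_sq_le_neg_one_div (hQ : 0 < Q) (hC : 0 < C) {w : ℝ} (hw : -(1 / Q) ≤ w)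
    (hw' : w ≤ -2 / C) : w + Q / 2 * w ^ 2 ≤ -1 / C := by
  have hC' : (0 : ℝ) < C := by exact_mod_cast hC
  have hw_neg : w ≤ 0 := hw'.trans (div_nonpos_of_nonpos_of_nonneg (by norm_num) hC'.le)
  have hQw : -1 ≤ Q * w := by
    have := mul_le_mul_of_nonneg_left hw hQ.le
    rwa [mul_neg, mul_one_div_cancel hQ.ne'] at this
  calc w + Q / 2 * w ^ 2 ≤ w / 2 := by nlinarith [mul_le_mul_of_nonpos_right hQw hw_neg]
    _ ≤ -2 / C / 2 := by gcongr
    _ = -1 / C := by ring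

lemma add_sq_le_exp_pow_sub_one_div (hQ : 0 < Q) (hC : 0 < C) (hQC : 2 * Q ≤ C) {w : ℝ}
    (hw : -(1 / Q) ≤ w) : w + Q / 2 * w ^ 2 ≤ (Real.exp w ^ C - 1) / C := by
  have hC' : (0 : ℝ) < C := by exact_mod_cast hC
  rcases le_total w (-2 / C) with h_small | h_large
  · refine (add_sq_le_neg_one_div hQ hC hw h_small).trans ?_
    gcongr
    linarith [pow_pos (Real.exp_pos w) C]
  have hCw : 0 ≤ C * w / 2 + 1 := by
    rw [div_le_iff₀ hC'] at h_large
    linarith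
  have h_exp : (C * w / 2 + 1) ^ 2 ≤ Real.exp w ^ C :=
    calc (C * w / 2 + 1) ^ 2 ≤ Real.exp (C * w / 2) ^ 2 := by
          gcongr; exact Real.add_one_le_exp _
      _ = Real.exp w ^ C := by
          rw [← Real.exp_nat_mul, ← Real.exp_nat_mul]
          congr 1
          push_cast
          ring
  have h_coeff : Q / 2 ≤ C / 4 := by linarith
  calc w + Q / 2 * w ^ 2 ≤ w + C / 4 * w ^ 2 := by gcongr
    _ = ((C * w / 2 + 1) ^ 2 - 1) / C := by field_simp; ring
    _ ≤ (Real.exp w ^ C - 1) / C := by gcongr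

lemma pow_add_mul_sub_le_pow {x y : ℝ} (hy : 0 < y) (hyx : y ≤ x) (hC : 0 < C) :
    y ^ C + C * y ^ (C - 1) * (x - y) ≤ x ^ C := by
  obtain ⟨n, rfl⟩ : ∃ n, C = n + 1 := ⟨C - 1, by omega⟩
  have h_bernoulli := one_add_mul_sub_le_pow (a := x / y) (n := n + 1)
    (by linarith [div_nonneg (hy.le.trans hyx) hy.le])
  calc y ^ (n + 1) + (n + 1 : ℕ) * y ^ (n + 1 - 1) * (x - y)
      = y ^ (n + 1) * (1 + (n + 1 : ℕ) * (x / y - 1)) := by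
        rw [Nat.add_sub_cancel]
        field_simp
        ring
    _ ≤ y ^ (n + 1) * (x / y) ^ (n + 1) := by gcongr
    _ = x ^ (n + 1) := by rw [← mul_pow, mul_div_cancel₀ _ hy.ne']

lemma exists_clipped_log (hQ : 1 ≤ Q) (hC : 1 + 32 * Q ≤ C) {x : ℝ} (hx : 0 ≤ x) :
    ∃ w : ℝ, |w| ≤ 1 / Q ∧
      w + Q / 2 * w ^ 2 + Real.exp 32 * max 0 (x - Real.exp w) ≤ (x ^ C - 1) / C := by
  have hQ' : 0 < Q := by linarith
  have hC' : (0 : ℝ) < C := by linarith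
  have hC_pos : 0 < C := by exact_mod_cast hC'
  have he : 0 < 1 / Q := by positivity
  have hCe : 32 ≤ (C - 1) * (1 / Q) := by
    rw [mul_one_div, le_div_iff₀ hQ']
    linarith
  rcases le_or_gt x (Real.exp (-(1 / Q))) with h_low | h_low
  · refine ⟨-(1 / Q), by rw [abs_neg, abs_of_pos he], ?_⟩
    rw [max_eq_left (by linarith), mul_zero, add_zero]
    refine (add_sq_le_neg_one_div hQ' hC_pos le_rfl ?_).trans ?_
    · rw [le_div_iff₀ hC']
      linarith
    · gcongr
      linarith [pow_nonneg hx C]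
  have hx' : 0 < x := (Real.exp_pos _).trans h_low
  rcases le_or_gt x (Real.exp (1 / Q)) with h_high | h_high
  · have h_log : -(1 / Q) ≤ Real.log x := (Real.le_log_iff_exp_le hx').2 h_low.le
    refine ⟨Real.log x, abs_le.2 ⟨h_log, (Real.log_le_iff_le_exp hx').2 h_high⟩, ?_⟩
    have h_quad := add_sq_le_exp_pow_sub_one_div hQ' hC_pos (by linarith) h_log
    rw [Real.exp_log hx'] at h_quad ⊢
    simpa using h_quad
  · refine ⟨1 / Q, (abs_of_pos he).le, ?_⟩
    have h_slope : Real.exp 32 ≤ Real.exp (1 / Q) ^ (C - 1) := by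
      rw [← Real.exp_nat_mul, Nat.cast_sub hC_pos, Nat.cast_one]
      exact Real.exp_le_exp.2 hCe
    rw [max_eq_right (by linarith)]
    calc 1 / Q + Q / 2 * (1 / Q) ^ 2 + Real.exp 32 * (x - Real.exp (1 / Q))
        ≤ (Real.exp (1 / Q) ^ C - 1) / C +
            Real.exp (1 / Q) ^ (C - 1) * (x - Real.exp (1 / Q)) :=
          add_le_add (add_sq_le_exp_pow_sub_one_div hQ' hC_pos (by linarith) (by linarith))
            (mul_le_mul_of_nonneg_right h_slope (by linarith))
      _ = (Real.exp (1 / Q) ^ C + C * Real.exp (1 / Q) ^ (C - 1) * (x - Real.exp (1 / Q)) - 1) /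
            C := by field_simp; ring
      _ ≤ (x ^ C - 1) / C := by
          gcongr
          exact pow_add_mul_sub_le_pow (Real.exp_pos _) h_high.le hC_pos

end Clipping

lemma IsSubcritical.hcPartition_mul_le {α : Type*} [DecidableEq α] {G : SimpleGraph α}
    {lam : α → ℝ} {Δ : ℕ} {δ : ℝ} (h : IsSubcritical G lam Δ δ) (U : Finset α) {x : α → ℝ}
    (hx : ∀ v, 0 ≤ x v) :
    hcPartition G (fun v => lam v * x v) U ≤ hcPartition G lam U *
      Real.exp ((∑ i ∈ U, occ G lam U i * (x i ^ entropicExponent δ - 1)) /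
        entropicExponent δ) := by
  have hδ := h.slack_mem_Ioo.1
  choose w hw_abs hw using fun v =>
    exists_clipped_log (one_le_curvatureBound hδ) (le_entropicExponent δ) (hx v)
  have h_tilt_nonneg : ∀ v, 0 ≤ lam v * Real.exp (w v) := fun v =>
    mul_nonneg (h.nonneg v) (Real.exp_pos _).le
  have h_clipped := h.log_hcPartition_tilt_le U fun v =>
    (hw_abs v).trans (one_div_curvatureBound_le hδ)
  rw [Real.log_le_iff_le_exp (hcPartition_pos G h_tilt_nonneg U), Real.exp_add,
    Real.exp_log (hcPartition_pos G h.nonneg U)] at h_clipped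
  have h_excess : ∀ i ∈ U, max 0 (lam i * x i - lam i * Real.exp (w i)) ≤
      occ G lam U i * (Real.exp 32 * max 0 (x i - Real.exp (w i))) := fun i hi =>
    calc max 0 (lam i * x i - lam i * Real.exp (w i)) = lam i * max 0 (x i - Real.exp (w i)) := by
          rw [← mul_sub, mul_max_of_nonneg _ _ (h.nonneg i), mul_zero]
      _ ≤ Real.exp 32 * occ G lam U i * max 0 (x i - Real.exp (w i)) :=
          mul_le_mul_of_nonneg_right (h.fugacity_le_exp_mul_occ hi) (le_max_left ..)
      _ = _ := by ring
  calc hcPartition G (fun v => lam v * x v) U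
      ≤ hcPartition G (fun v => lam v * Real.exp (w v)) U *
          Real.exp (∑ i ∈ U, max 0 (lam i * x i - lam i * Real.exp (w i))) :=
        hcPartition_le_mul_exp G h_tilt_nonneg (fun v => mul_nonneg (h.nonneg v) (hx v)) U
    _ ≤ hcPartition G lam U *
          Real.exp (∑ i ∈ U, occ G lam U i * (w i + curvatureBound δ / 2 * w i ^ 2)) *
          Real.exp (∑ i ∈ U, occ G lam U i * (Real.exp 32 * max 0 (x i - Real.exp (w i)))) :=
        mul_le_mul h_clipped (Real.exp_le_exp.2 (sum_le_sum h_excess)) (Real.exp_pos _).le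
          (mul_nonneg (hcPartition_pos G h.nonneg U).le (Real.exp_pos _).le)
    _ ≤ _ := by
        rw [mul_assoc, ← Real.exp_add, ← sum_add_distrib, sum_div]
        refine mul_le_mul_of_nonneg_left (Real.exp_le_exp.2 (sum_le_sum fun i _ => ?_))
          (hcPartition_pos G h.nonneg U).le
        rw [← mul_add, mul_div_assoc]
        exact mul_le_mul_of_nonneg_left (hw i) (occ_nonneg G h.nonneg U i)

/-! ### Relative entropy -/

lemma sum_mul_log_sum_div_sum_le {ι : Type*} {S : Finset ι} {a b : ι → ℝ}
    (ha : ∀ i ∈ S, 0 ≤ a i) (hb : ∀ i ∈ S, 0 ≤ b i) (hab : ∀ i ∈ S, b i = 0 → a i = 0) :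
    (∑ i ∈ S, a i) * Real.log ((∑ i ∈ S, a i) / ∑ i ∈ S, b i) ≤
      ∑ i ∈ S, a i * Real.log (a i / b i) := by
  rcases (sum_nonneg hb).eq_or_lt' with hB | hB
  · have h_zero : ∀ i ∈ S, a i = 0 := fun i hi =>
      hab i hi ((sum_eq_zero_iff_of_nonneg hb).1 hB i hi)
    rw [sum_eq_zero h_zero, zero_mul, sum_eq_zero fun i hi => by rw [h_zero i hi, zero_mul]]
  have h_cancel : ∀ i ∈ S, b i * (a i / b i) = a i := fun i hi =>
    mul_div_cancel_of_imp' (hab i hi)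
  have h_cancel_log : ∀ i ∈ S, b i * (a i / b i) * Real.log (a i / b i) =
      a i * Real.log (a i / b i) := fun i hi => by rw [h_cancel i hi]
  have h_jensen := Real.convexOn_mul_log.map_centerMass_le hb hB
    (p := fun i => a i / b i) fun i hi => div_nonneg (ha i hi) (hb i hi)
  simp only [centerMass, smul_eq_mul, Function.comp, ← mul_assoc] at h_jensen
  rw [sum_congr rfl h_cancel, sum_congr rfl h_cancel_log,
    inv_mul_eq_div, inv_mul_eq_div, div_mul_eq_mul_div, div_le_div_iff_of_pos_right hB] at h_jensen
  exact h_jensen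

section MarkovKernels

variable {Ω : Type*} [Fintype Ω] {q μ : Ω → ℝ} {K : Ω → Ω → ℝ}

lemma stepDist_stepDist (q : Ω → ℝ) (K L : Ω → Ω → ℝ) :
    stepDist (stepDist q K) L = stepDist q fun x => stepDist (K x) L := by
  funext z
  simp only [stepDist, sum_mul, mul_sum]
  rw [sum_comm]
  simp only [mul_assoc]

lemma stepDist_nonneg (hq : ∀ x, 0 ≤ q x) (hK : ∀ x y, 0 ≤ K x y) (y : Ω) : 0 ≤ stepDist q K y :=
  sum_nonneg fun x _ => mul_nonneg (hq x) (hK x y)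

lemma sum_stepDist (hrow : ∀ x, q x ≠ 0 → ∑ y, K x y = 1) : ∑ y, stepDist q K y = ∑ x, q x := by
  unfold stepDist
  rw [sum_comm]
  refine sum_congr rfl fun x _ => ?_
  rw [← mul_sum]
  rcases eq_or_ne (q x) 0 with hx | hx
  · rw [hx, zero_mul]
  · rw [hrow x hx, mul_one]

lemma stepDist_eq_zero_of_stepDist_eq_zero (hμ : ∀ x, 0 ≤ μ x) (hac : ∀ x, μ x = 0 → q x = 0)
    (hK : ∀ x y, 0 ≤ K x y) {y : Ω} (hy : stepDist μ K y = 0) : stepDist q K y = 0 := by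
  refine sum_eq_zero fun x hx => ?_
  rcases mul_eq_zero.1 ((sum_eq_zero_iff_of_nonneg fun x _ => mul_nonneg (hμ x) (hK x y)).1 hy x hx)
    with h | h
  · rw [hac x h, zero_mul]
  · rw [h, mul_zero]

lemma KLdiv_stepDist_le (hq : ∀ x, 0 ≤ q x) (hμ : ∀ x, 0 ≤ μ x) (hac : ∀ x, μ x = 0 → q x = 0)
    (hK : ∀ x y, 0 ≤ K x y) (hrow : ∀ x, q x ≠ 0 → ∑ y, K x y = 1) :
    KLdiv (stepDist q K) (stepDist μ K) ≤ KLdiv q μ := by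
  have h_term : ∀ x y, q x * K x y * Real.log (q x * K x y / (μ x * K x y)) =
      q x * Real.log (q x / μ x) * K x y := fun x y => by
    rcases eq_or_ne (K x y) 0 with h | h
    · simp [h]
    · rw [mul_div_mul_right _ _ h, mul_right_comm]
  calc KLdiv (stepDist q K) (stepDist μ K)
      ≤ ∑ y, ∑ x, q x * K x y * Real.log (q x * K x y / (μ x * K x y)) := by
        refine sum_le_sum fun y _ => sum_mul_log_sum_div_sum_le
          (fun x _ => mul_nonneg (hq x) (hK x y)) (fun x _ => mul_nonneg (hμ x) (hK x y))
          fun x _ h => ?_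
        rcases mul_eq_zero.1 h with h | h
        · rw [hac x h, zero_mul]
        · rw [h, mul_zero]
    _ = ∑ y, stepDist (fun x => q x * Real.log (q x / μ x)) K y := by
        simp only [h_term, stepDist]
    _ = KLdiv q μ := sum_stepDist fun x hx => hrow x (left_ne_zero_of_mul hx)

/-! ### Resampling dynamics -/

/-- The distribution `q` is a probability distribution which is absolutely continuous with respect
to `μ`; these are the laws whose relative entropy `KLdiv q μ` is meaningful. -/
structure IsAbsContLaw (q μ : Ω → ℝ) : Prop where
  nonneg (x : Ω) : 0 ≤ q x
  sum_eq_one : ∑ x, q x = 1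
  eq_zero_of_eq_zero (x : Ω) : μ x = 0 → q x = 0

/-- The posterior distribution of `x`, with prior `μ`, given that one step of the kernel `K` from
`x` led to `y`. It is identically zero if `y` cannot be reached. -/
def posterior (μ : Ω → ℝ) (K : Ω → Ω → ℝ) (y x : Ω) : ℝ :=
  μ x * K x y / stepDist μ K y

/-- The dynamics which moves along the noise kernel `K` and then resamples the past from its
posterior with prior `μ`. Both the field dynamics and the single-site updates are of this form. -/
def resampleKernel (μ : Ω → ℝ) (K : Ω → Ω → ℝ) (x : Ω) : Ω → ℝ :=
  stepDist (K x) (posterior μ K)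

lemma stepDist_resampleKernel (q μ : Ω → ℝ) (K : Ω → Ω → ℝ) :
    stepDist q (resampleKernel μ K) = stepDist (stepDist q K) (posterior μ K) :=
  (stepDist_stepDist q K (posterior μ K)).symm

section Nonneg

variable (hμ : ∀ x, 0 ≤ μ x) (hK : ∀ x y, 0 ≤ K x y)
include hμ hK

lemma posterior_nonneg (y x : Ω) : 0 ≤ posterior μ K y x :=
  div_nonneg (mul_nonneg (hμ x) (hK x y)) (stepDist_nonneg hμ hK y)

lemma sum_posterior (hq : IsAbsContLaw q μ) {y : Ω} (hy : stepDist q K y ≠ 0) :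
    ∑ x, posterior μ K y x = 1 := by
  simp only [posterior, ← sum_div]
  exact div_self fun h =>
    hy (stepDist_eq_zero_of_stepDist_eq_zero hμ hq.eq_zero_of_eq_zero hK h)

variable (hrow : ∀ x, ∑ y, K x y = 1)
include hrow

lemma stepDist_posterior : stepDist (stepDist μ K) (posterior μ K) = μ := by
  funext x
  have h_cancel : ∀ y, stepDist μ K y * posterior μ K y x = μ x * K x y := fun y =>
    mul_div_cancel_of_imp' fun hy => (sum_eq_zero_iff_of_nonneg fun x _ =>
      mul_nonneg (hμ x) (hK x y)).1 hy x (mem_univ x)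
  rw [stepDist, sum_congr rfl fun y _ => h_cancel y, ← mul_sum, hrow, mul_one]

lemma isAbsContLaw_stepDist_resampleKernel (hq : IsAbsContLaw q μ) :
    IsAbsContLaw (stepDist q (resampleKernel μ K)) μ := by
  rw [stepDist_resampleKernel]
  refine ⟨stepDist_nonneg (stepDist_nonneg hq.nonneg hK) (posterior_nonneg hμ hK), ?_, fun x hx =>
    sum_eq_zero fun y _ => by rw [posterior, hx, zero_mul, zero_div, mul_zero]⟩
  rw [sum_stepDist fun y => sum_posterior hμ hK hq, sum_stepDist fun x _ => hrow x, hq.sum_eq_one]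

/-- Data processing for the posterior kernel, which maps the noisy version of `μ` back to `μ`. -/
lemma KLdiv_stepDist_resampleKernel_le (hq : IsAbsContLaw q μ) :
    KLdiv (stepDist q (resampleKernel μ K)) μ ≤ KLdiv (stepDist q K) (stepDist μ K) := by
  have h_data := KLdiv_stepDist_le (stepDist_nonneg hq.nonneg hK) (stepDist_nonneg hμ hK)
    (fun _ => stepDist_eq_zero_of_stepDist_eq_zero hμ hq.eq_zero_of_eq_zero hK)
    (posterior_nonneg hμ hK) fun y => sum_posterior hμ hK hq
  rwa [stepDist_posterior hμ hK hrow, ← stepDist_resampleKernel] at h_data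

end Nonneg

end MarkovKernels

/-! ### Entropic independence -/

section EntropicIndependence

variable {ι κ : Type*} [DecidableEq κ]

/-- The total weight under `a` of the configurations `σ ∈ S` in which the site `i` is occupied,
where `N σ` is the set of occupied sites of `σ`. -/
def siteMarginal (S : Finset ι) (N : ι → Finset κ) (a : ι → ℝ) (i : κ) : ℝ :=
  ∑ σ ∈ S with i ∈ N σ, a σ

variable {S : Finset ι} {W : Finset κ} {N : ι → Finset κ} {a b : ι → ℝ}

lemma siteMarginal_nonneg (ha : ∀ σ ∈ S, 0 ≤ a σ) (i : κ) : 0 ≤ siteMarginal S N a i :=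
  sum_nonneg fun σ hσ => ha σ (mem_filter.1 hσ).1

lemma siteMarginal_eq_zero_iff (ha : ∀ σ ∈ S, 0 ≤ a σ) {i : κ} :
    siteMarginal S N a i = 0 ↔ ∀ σ ∈ S, i ∈ N σ → a σ = 0 := by
  rw [siteMarginal, sum_eq_zero_iff_of_nonneg fun σ hσ => ha σ (mem_filter.1 hσ).1]
  simp only [mem_filter, and_imp]

lemma sum_mul_sum_eq_sum_siteMarginal_mul (hN : ∀ σ ∈ S, N σ ⊆ W) (a : ι → ℝ) (y : κ → ℝ) :
    ∑ σ ∈ S, a σ * ∑ i ∈ N σ, y i = ∑ i ∈ W, siteMarginal S N a i * y i := by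
  simp only [siteMarginal, mul_sum, sum_mul]
  refine sum_comm' fun σ i => ?_
  rw [mem_filter]
  exact ⟨fun h => ⟨h, hN σ h.1 h.2⟩, fun h => h.1⟩

/-- Gibbs' variational principle, tested on the measure with weights `b σ * ∏ i ∈ N σ, x i`. -/
lemma sum_siteMarginal_mul_log_sub_le (hN : ∀ σ ∈ S, N σ ⊆ W) (ha : ∀ σ ∈ S, 0 ≤ a σ)
    (hb : ∀ σ ∈ S, 0 ≤ b σ) (hab : ∀ σ ∈ S, b σ = 0 → a σ = 0) {x : κ → ℝ} (hx : ∀ i, 0 ≤ x i)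
    (hax : ∀ σ ∈ S, a σ ≠ 0 → ∀ i ∈ N σ, x i ≠ 0) {X : ℝ} (hA : 0 < ∑ σ ∈ S, a σ)
    (hX : ∑ σ ∈ S, b σ * ∏ i ∈ N σ, x i ≤ (∑ σ ∈ S, b σ) * Real.exp X) :
    ∑ i ∈ W, siteMarginal S N a i * Real.log (x i) - (∑ σ ∈ S, a σ) * X ≤
      ∑ σ ∈ S, a σ * (Real.log (a σ / b σ) - Real.log ((∑ σ ∈ S, a σ) / ∑ σ ∈ S, b σ)) := by
  set A := ∑ σ ∈ S, a σ with hA_def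
  set B := ∑ σ ∈ S, b σ
  set Z := ∑ σ ∈ S, b σ * ∏ i ∈ N σ, x i
  have h_prod : ∀ σ ∈ S, a σ ≠ 0 → ∏ i ∈ N σ, x i ≠ 0 :=
    fun σ hσ h => prod_ne_zero_iff.2 (hax σ hσ h)
  have h_nonneg : ∀ σ ∈ S, 0 ≤ b σ * ∏ i ∈ N σ, x i := fun σ hσ =>
    mul_nonneg (hb σ hσ) (prod_nonneg fun i _ => hx i)
  have h_ac : ∀ σ ∈ S, b σ * ∏ i ∈ N σ, x i = 0 → a σ = 0 := fun σ hσ h => by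
    by_contra h_ne
    exact mul_ne_zero (fun h' => h_ne (hab σ hσ h')) (h_prod σ hσ h_ne) h
  have hZ : 0 < Z := (sum_nonneg h_nonneg).lt_of_ne' fun h => hA.ne' <|
    sum_eq_zero fun σ hσ => h_ac σ hσ ((sum_eq_zero_iff_of_nonneg h_nonneg).1 h σ hσ)
  have hB : 0 < B := pos_of_mul_pos_left (hZ.trans_le hX) (Real.exp_pos X).le
  have h_log_sum := sum_mul_log_sum_div_sum_le ha h_nonneg h_ac
  have h_log_Z : Real.log Z ≤ Real.log B + X := by
    rw [← Real.log_exp X, ← Real.log_mul hB.ne' (Real.exp_pos X).ne']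
    exact Real.log_le_log hZ hX
  have h_term : ∀ σ ∈ S, a σ * Real.log (a σ / (b σ * ∏ i ∈ N σ, x i)) =
      a σ * Real.log (a σ / b σ) - a σ * ∑ i ∈ N σ, Real.log (x i) := fun σ hσ => by
    rcases eq_or_ne (a σ) 0 with h | h
    · simp [h]
    · rw [← div_div, Real.log_div (div_ne_zero h fun h' => h (hab σ hσ h')) (h_prod σ hσ h),
        Real.log_prod (hax σ hσ h), mul_sub]
  rw [sum_congr rfl h_term, sum_sub_distrib, sum_mul_sum_eq_sum_siteMarginal_mul hN,
    Real.log_div hA.ne' hZ.ne'] at h_log_sum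
  simp only [mul_sub, sum_sub_distrib]
  rw [← sum_mul, ← hA_def, Real.log_div hA.ne' hB.ne']
  linarith [mul_le_mul_of_nonneg_left h_log_Z hA.le]

lemma mul_log_rpow_sub_mul_rpow_pow_sub_one {A B a b : ℝ} (hA : 0 < A) (hB : 0 < B) (ha : 0 ≤ a)
    (hb : 0 ≤ b) (hab : b = 0 → a = 0) {C : ℕ} (hC : 0 < C) :
    C * (a * Real.log ((a / b / (A / B)) ^ (C : ℝ)⁻¹)) -
        A * (b / B * (((a / b / (A / B)) ^ (C : ℝ)⁻¹) ^ C - 1)) =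
      a * (Real.log (a / b) - Real.log (A / B)) - a + A * (b / B) := by
  have hAB : 0 < A / B := div_pos hA hB
  rw [Real.rpow_inv_natCast_pow (div_nonneg (div_nonneg ha hb) hAB.le) hC.ne']
  rcases ha.eq_or_lt' with rfl | ha
  · simp
  · have hb : 0 < b := hb.lt_of_ne' fun h => ha.ne' (hab h)
    have : (0 : ℝ) < C := by exact_mod_cast hC
    rw [Real.log_rpow (div_pos (div_pos ha hb) hAB), Real.log_div (div_pos ha hb).ne' hAB.ne']
    field_simp
    ring

/-- The generating-function bound is applied at the point `x` for which `x i ^ C` is the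
ratio of the probabilities of `i` under `a` and under `b`. -/
lemma sum_siteMarginal_mul_log_le_of_generating_function_le (hN : ∀ σ ∈ S, N σ ⊆ W)
    (ha : ∀ σ ∈ S, 0 ≤ a σ) (hb : ∀ σ ∈ S, 0 ≤ b σ) (hab : ∀ σ ∈ S, b σ = 0 → a σ = 0) {C : ℕ}
    (hC : 0 < C)
    (hgen : ∀ x : κ → ℝ, (∀ i, 0 ≤ x i) → ∑ σ ∈ S, b σ * ∏ i ∈ N σ, x i ≤
      (∑ σ ∈ S, b σ) * Real.exp
        ((∑ i ∈ W, siteMarginal S N b i / (∑ σ ∈ S, b σ) * (x i ^ C - 1)) / C)) :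
    ∑ i ∈ W, (siteMarginal S N a i * (Real.log (siteMarginal S N a i / siteMarginal S N b i) -
        Real.log ((∑ σ ∈ S, a σ) / ∑ σ ∈ S, b σ)) - siteMarginal S N a i +
        (∑ σ ∈ S, a σ) * (siteMarginal S N b i / ∑ σ ∈ S, b σ)) ≤
      C * ∑ σ ∈ S, a σ * (Real.log (a σ / b σ) -
        Real.log ((∑ σ ∈ S, a σ) / ∑ σ ∈ S, b σ)) := by
  have h_zero : ∀ i, siteMarginal S N a i = 0 ↔ ∀ σ ∈ S, i ∈ N σ → a σ = 0 := fun i =>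
    siteMarginal_eq_zero_iff ha
  have h_ac : ∀ i, siteMarginal S N b i = 0 → siteMarginal S N a i = 0 := fun i h =>
    (h_zero i).2 fun σ hσ hi => hab σ hσ ((siteMarginal_eq_zero_iff hb).1 h σ hσ hi)
  rcases (sum_nonneg ha).eq_or_lt' with hA | hA
  · have h_all := (sum_eq_zero_iff_of_nonneg ha).1 hA
    simp [hA, (h_zero _).2 fun σ hσ _ => h_all σ hσ,
      sum_eq_zero fun σ hσ => mul_eq_zero_of_left (h_all σ hσ) _]
  have hB : 0 < ∑ σ ∈ S, b σ := (sum_nonneg hb).lt_of_ne' fun h => hA.ne' <|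
    sum_eq_zero fun σ hσ => hab σ hσ ((sum_eq_zero_iff_of_nonneg hb).1 h σ hσ)
  have hC_ne : (C : ℝ) ≠ 0 := by exact_mod_cast hC.ne'
  have hAB := div_pos hA hB
  have h_ratio : ∀ i, 0 ≤ siteMarginal S N a i / siteMarginal S N b i / (_ / _) := fun i =>
    div_nonneg (div_nonneg (siteMarginal_nonneg ha i) (siteMarginal_nonneg hb i)) hAB.le
  have hx : ∀ i, 0 ≤ (siteMarginal S N a i / siteMarginal S N b i / (_ / _)) ^ (C : ℝ)⁻¹ :=
    fun i => Real.rpow_nonneg (h_ratio i) _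
  have h_ratio_ne : ∀ σ ∈ S, a σ ≠ 0 → ∀ i ∈ N σ,
      siteMarginal S N a i / siteMarginal S N b i / (_ / _) ≠ 0 := fun σ hσ h i hi =>
    have h_ne : siteMarginal S N a i ≠ 0 := fun h' => h ((h_zero i).1 h' σ hσ hi)
    div_ne_zero (div_ne_zero h_ne fun h' => h_ne (h_ac i h')) hAB.ne'
  have h_gibbs := sum_siteMarginal_mul_log_sub_le hN ha hb hab hx (fun σ hσ h i hi =>
    (Real.rpow_ne_zero (h_ratio i) (inv_ne_zero hC_ne)).2 (h_ratio_ne σ hσ h i hi)) hA (hgen _ hx)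
  refine le_of_eq_of_le ?_ (mul_le_mul_of_nonneg_left h_gibbs (Nat.cast_nonneg C))
  rw [mul_sub, mul_left_comm, mul_div_cancel₀ _ hC_ne, mul_sum, mul_sum, ← sum_sub_distrib]
  exact sum_congr rfl fun i _ => (mul_log_rpow_sub_mul_rpow_pow_sub_one hA hB
    (siteMarginal_nonneg ha i) (siteMarginal_nonneg hb i) (h_ac i) hC).symm

end EntropicIndependence

/-! ### Continuous-time pinning -/

/-- The mass under `ν` of the configurations containing `T`, where every site outside `T` is
discounted by `s`. It is the unnormalized mass of `s ∗ ν` pinned to be occupied on `T`. -/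
def pinnedMass (ν : Finset V → ℝ) (s : ℝ) (T : Finset V) : ℝ :=
  ∑ σ ∈ Ici T, ν σ * s ^ #(σ \ T)

/-- The Markov kernel which pins each occupied site of `σ` independently with probability `1 - s`
and returns the set of pinned sites. -/
def pinKernel (s : ℝ) (σ T : Finset V) : ℝ :=
  if T ⊆ σ then s ^ #(σ \ T) * (1 - s) ^ #T else 0

/-- The log-likelihood ratio of `ν` and `μ` for the event that `T` is the set of pinned sites. The
pinning probabilities cancel, so that it makes sense also at `s = 1`. -/
def pinnedLogRatio (ν μ : Finset V → ℝ) (s : ℝ) (T : Finset V) : ℝ :=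
  Real.log (pinnedMass ν s T / pinnedMass μ s T)

/-- The rate at which relative entropy of `ν` with respect to `μ` is revealed by pinning one more
site when `T` is already pinned: the Bregman divergence, for `x * log x - x`, between the occupation
rates of the sites outside `T`, scaled by the mass of `T`. -/
def marginalDivergence (ν μ : Finset V → ℝ) (s : ℝ) (T : Finset V) : ℝ :=
  ∑ i ∈ Tᶜ, (pinnedMass ν s (insert i T) *
      (pinnedLogRatio ν μ s (insert i T) - pinnedLogRatio ν μ s T) -
    pinnedMass ν s (insert i T) +
    pinnedMass ν s T * (pinnedMass μ s (insert i T) / pinnedMass μ s T))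

variable {ν μ : Finset V → ℝ} {s : ℝ} {T : Finset V}

lemma pinnedMass_eq_zero_iff (hν : ∀ σ, 0 ≤ ν σ) (hs : 0 < s) :
    pinnedMass ν s T = 0 ↔ ∀ σ, T ⊆ σ → ν σ = 0 := by
  rw [pinnedMass, sum_eq_zero_iff_of_nonneg fun σ _ => mul_nonneg (hν σ) (pow_pos hs _).le]
  simp only [mem_Ici, mul_eq_zero, (pow_pos hs _).ne', or_false]

lemma pinnedMass_eq_zero_of_pinnedMass_eq_zero (hμ : ∀ σ, 0 ≤ μ σ) (hac : ∀ σ, μ σ = 0 → ν σ = 0)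
    (hs : 0 < s) (h : pinnedMass μ s T = 0) : pinnedMass ν s T = 0 :=
  sum_eq_zero fun σ hσ => by
    rw [hac σ ((pinnedMass_eq_zero_iff hμ hs).1 h σ (mem_Ici.1 hσ)), zero_mul]

omit [Fintype V] in
lemma card_sdiff_insert {σ : Finset V} {i : V} (hi : i ∈ σ \ T) :
    #(σ \ insert i T) = #(σ \ T) - 1 := by
  rw [sdiff_insert, card_erase_of_mem hi]

lemma mul_pinnedMass_insert {i : V} (hi : i ∉ T) (ν : Finset V → ℝ) (s : ℝ) :
    s * pinnedMass ν s (insert i T) =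
      siteMarginal (Ici T) (· \ T) (fun σ => ν σ * s ^ #(σ \ T)) i := by
  have h_filter : {σ ∈ Ici T | i ∈ σ \ T} = Ici (insert i T) := by
    ext σ
    simp only [mem_filter, mem_Ici, mem_sdiff, insert_subset_iff]
    tauto
  rw [siteMarginal, h_filter, pinnedMass, mul_sum]
  refine sum_congr rfl fun σ hσ => ?_
  have h_mem : i ∈ σ \ T := mem_sdiff.2 ⟨mem_Ici.1 hσ (mem_insert_self i T), hi⟩
  rw [card_sdiff_insert h_mem, mul_left_comm, mul_pow_sub_one (card_ne_zero_of_mem h_mem)]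

lemma hasDerivAt_pinnedMass (ν : Finset V → ℝ) (s : ℝ) (T : Finset V) :
    HasDerivAt (pinnedMass ν · T) (∑ i ∈ Tᶜ, pinnedMass ν s (insert i T)) s := by
  have h_swap : ∑ i ∈ Tᶜ, pinnedMass ν s (insert i T) =
      ∑ σ ∈ Ici T, ∑ i ∈ σ \ T, ν σ * s ^ #(σ \ insert i T) :=
    sum_comm' fun i σ => by
      simp only [mem_compl, mem_Ici, mem_sdiff, insert_subset_iff]
      tauto
  rw [h_swap]
  refine HasDerivAt.fun_sum fun σ _ => ((hasDerivAt_pow _ s).const_mul (ν σ)).congr_deriv ?_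
  rw [sum_congr rfl fun i hi => by rw [card_sdiff_insert hi], sum_const, nsmul_eq_mul,
    mul_left_comm]

lemma sum_sum_mem_eq_sum_sum_compl_insert (f : Finset V → V → ℝ) :
    ∑ T, ∑ i ∈ T, f T i = ∑ T, ∑ i ∈ Tᶜ, f (insert i T) i := by
  rw [sum_sigma', sum_sigma']
  refine sum_bij' (fun p _ => ⟨p.1.erase p.2, p.2⟩) (fun p _ => ⟨insert p.2 p.1, p.2⟩)
    ?_ ?_ ?_ ?_ ?_ <;> rintro ⟨T, i⟩ h <;>
    simp only [mem_sigma, mem_univ, true_and, mem_compl] at h <;> simp [h]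

lemma hasDerivAt_sum_one_sub_pow_card_mul {F : Finset V → ℝ → ℝ} {F' : Finset V → V → ℝ}
    (hF : ∀ T, HasDerivAt (F T) (∑ i ∈ Tᶜ, F' T i) s) :
    HasDerivAt (fun s => ∑ T, (1 - s) ^ #T * F T s)
      (∑ T : Finset V, (1 - s) ^ #T * ∑ i ∈ Tᶜ, (F' T i - F (insert i T) s)) s := by
  have h_pow : ∀ n : ℕ, HasDerivAt (fun s : ℝ => (1 - s) ^ n) (n * (1 - s) ^ (n - 1) * -1) s :=
    fun n => ((hasDerivAt_id s).const_sub 1).pow n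
  have h_shift : ∑ T : Finset V, #T * (1 - s) ^ (#T - 1) * F T s =
      ∑ T : Finset V, (1 - s) ^ #T * ∑ i ∈ Tᶜ, F (insert i T) s := by
    have h_const : ∀ T : Finset V, #T * (1 - s) ^ (#T - 1) * F T s =
        ∑ i ∈ T, (1 - s) ^ (#T - 1) * F T s := fun T => by
      rw [sum_const, nsmul_eq_mul, mul_assoc]
    simp only [h_const]
    rw [sum_sum_mem_eq_sum_sum_compl_insert]
    refine sum_congr rfl fun T _ => ?_
    rw [mul_sum]
    exact sum_congr rfl fun i hi => by
      rw [card_insert_of_notMem (mem_compl.1 hi), Nat.add_sub_cancel]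
  refine (HasDerivAt.fun_sum fun T _ => (h_pow #T).mul (hF T)).congr_deriv ?_
  simp only [sum_sub_distrib, mul_sub, sum_add_distrib, mul_neg_one, neg_mul, sum_neg_distrib,
    h_shift]
  ring

lemma stepDist_pinKernel (ν : Finset V → ℝ) (s : ℝ) (T : Finset V) :
    stepDist ν (pinKernel s) T = (1 - s) ^ #T * pinnedMass ν s T := by
  have h_Ici : ({σ | T ⊆ σ} : Finset (Finset V)) = Ici T := by ext σ; simp
  simp only [stepDist, pinKernel, mul_ite, mul_zero, ← sum_filter, h_Ici, pinnedMass, mul_sum]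
  exact sum_congr rfl fun σ _ => by ring

lemma sum_pinKernel (s : ℝ) (σ : Finset V) : ∑ T, pinKernel s σ T = 1 := by
  have h_powerset : ({T | T ⊆ σ} : Finset (Finset V)) = σ.powerset := by ext T; simp
  simp only [pinKernel, ← sum_filter, h_powerset]
  calc ∑ T ∈ σ.powerset, s ^ #(σ \ T) * (1 - s) ^ #T
      = ∑ T ∈ σ.powerset, (1 - s) ^ #T * s ^ (#σ - #T) :=
        sum_congr rfl fun T hT => by rw [card_sdiff_of_subset (mem_powerset.1 hT), mul_comm]
    _ = 1 := by rw [sum_pow_mul_eq_add_pow, sub_add_cancel, one_pow]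

lemma KLdiv_stepDist_pinKernel (ν μ : Finset V → ℝ) (s : ℝ) :
    KLdiv (stepDist ν (pinKernel s)) (stepDist μ (pinKernel s)) =
      ∑ T, (1 - s) ^ #T * (pinnedMass ν s T * pinnedLogRatio ν μ s T) := by
  refine sum_congr rfl fun T _ => ?_
  rw [stepDist_pinKernel, stepDist_pinKernel, mul_assoc, pinnedLogRatio]
  rcases eq_or_ne ((1 - s) ^ #T) 0 with h | h
  · rw [h, zero_mul, zero_mul]
  · rw [mul_div_mul_left _ _ h]

lemma sum_one_sub_pow_card_mul_pinnedMass_log_sub (ν μ : Finset V → ℝ) (s : ℝ) :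
    ∑ T, (1 - s) ^ #T *
        pinnedMass (fun σ => ν σ * (Real.log (ν σ / μ σ) - pinnedLogRatio ν μ s T)) s T =
      KLdiv ν μ - KLdiv (stepDist ν (pinKernel s)) (stepDist μ (pinKernel s)) := by
  have h_total : ∑ T, (1 - s) ^ #T * pinnedMass (fun σ => ν σ * Real.log (ν σ / μ σ)) s T =
      KLdiv ν μ := by
    simp only [← stepDist_pinKernel]
    exact sum_stepDist fun σ _ => sum_pinKernel s σ
  rw [KLdiv_stepDist_pinKernel, ← h_total, ← sum_sub_distrib]
  refine sum_congr rfl fun T _ => ?_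
  rw [← mul_sub, pinnedMass, pinnedMass, pinnedMass, sum_mul, ← sum_sub_distrib]
  exact congr_arg _ (sum_congr rfl fun σ _ => by ring)

lemma hasDerivAt_pinnedMass_mul_pinnedLogRatio (hν : ∀ σ, 0 ≤ ν σ) (hμ : ∀ σ, 0 ≤ μ σ)
    (hac : ∀ σ, μ σ = 0 → ν σ = 0) (hs : 0 < s) (T : Finset V) :
    HasDerivAt (fun s => pinnedMass ν s T * pinnedLogRatio ν μ s T)
      (∑ i ∈ Tᶜ, (pinnedMass ν s (insert i T) * pinnedLogRatio ν μ s T +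
        pinnedMass ν s (insert i T) -
        pinnedMass ν s T * (pinnedMass μ s (insert i T) / pinnedMass μ s T))) s := by
  by_cases hA : pinnedMass ν s T = 0
  · have h_null := (pinnedMass_eq_zero_iff hν hs).1 hA
    have h_zero : ∀ (t : ℝ) (U : Finset V), T ⊆ U → pinnedMass ν t U = 0 := fun t U hU =>
      sum_eq_zero fun σ hσ => by rw [h_null σ (hU.trans (mem_Ici.1 hσ)), zero_mul]
    simp only [h_zero _ _ subset_rfl, h_zero _ _ (subset_insert _ T), zero_mul, sub_zero, add_zero,
      sum_const_zero]
    exact hasDerivAt_const s 0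
  · have hB : pinnedMass μ s T ≠ 0 := fun h =>
      hA (pinnedMass_eq_zero_of_pinnedMass_eq_zero hμ hac hs h)
    have h_ν := hasDerivAt_pinnedMass ν s T
    have h_log := (h_ν.div (hasDerivAt_pinnedMass μ s T) hB).log (div_ne_zero hA hB)
    refine (h_ν.mul h_log).congr_deriv ?_
    simp only [sum_sub_distrib, sum_add_distrib, ← sum_mul, ← mul_sum, ← sum_div, pinnedLogRatio,
      Pi.div_apply]
    field_simp
    ring

lemma hasDerivAt_KLdiv_stepDist_pinKernel (hν : ∀ σ, 0 ≤ ν σ) (hμ : ∀ σ, 0 ≤ μ σ)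
    (hac : ∀ σ, μ σ = 0 → ν σ = 0) (hs : 0 < s) :
    HasDerivAt (fun s => KLdiv (stepDist ν (pinKernel s)) (stepDist μ (pinKernel s)))
      (-∑ T, (1 - s) ^ #T * marginalDivergence ν μ s T) s := by
  simp only [KLdiv_stepDist_pinKernel]
  refine (hasDerivAt_sum_one_sub_pow_card_mul
    (hasDerivAt_pinnedMass_mul_pinnedLogRatio hν hμ hac hs)).congr_deriv ?_
  simp only [marginalDivergence, ← sum_neg_distrib, ← mul_neg]
  exact sum_congr rfl fun T _ => congr_arg _ (sum_congr rfl fun i _ => by ring)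

lemma KLdiv_stepDist_pinKernel_one (h : ∑ σ, ν σ = ∑ σ, μ σ) :
    KLdiv (stepDist ν (pinKernel 1)) (stepDist μ (pinKernel 1)) = 0 := by
  have h_empty : ∀ ρ : Finset V → ℝ, pinnedMass ρ 1 ∅ = ∑ σ, ρ σ := fun ρ => by
    simp [pinnedMass, ← bot_eq_empty]
  rw [KLdiv_stepDist_pinKernel, sum_eq_single ∅]
  · rw [pinnedLogRatio, h_empty, h_empty, h]
    rcases eq_or_ne (∑ σ, μ σ) 0 with h_zero | h_ne
    · simp [h_zero]
    · simp [div_self h_ne]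
  · intro T _ hT
    rw [sub_self, zero_pow (card_ne_zero.2 (nonempty_iff_ne_empty.2 hT)), zero_mul]
  · simp

/-- Grönwall's inequality for the relative entropy not yet revealed by the pinned sites, as a
function of `s`: at `s = 1` nothing has been revealed. -/
lemma KLdiv_stepDist_pinKernel_le (hν : ∀ σ, 0 ≤ ν σ) (hμ : ∀ σ, 0 ≤ μ σ)
    (hac : ∀ σ, μ σ = 0 → ν σ = 0) (h_sum : ∑ σ, ν σ = ∑ σ, μ σ) {C : ℕ}
    (h_indep : ∀ s, 0 < s → s ≤ 1 → ∀ T, s * marginalDivergence ν μ s T ≤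
      C * pinnedMass (fun σ => ν σ * (Real.log (ν σ / μ σ) - pinnedLogRatio ν μ s T)) s T)
    {θ : ℝ} (hθ0 : 0 < θ) (hθ1 : θ ≤ 1) :
    KLdiv (stepDist ν (pinKernel θ)) (stepDist μ (pinKernel θ)) ≤ (1 - θ ^ C) * KLdiv ν μ := by
  have h_deriv : ∀ s ∈ Set.Icc θ 1, HasDerivAt
      (fun s => KLdiv ν μ - KLdiv (stepDist ν (pinKernel s)) (stepDist μ (pinKernel s)))
      (∑ T, (1 - s) ^ #T * marginalDivergence ν μ s T) s := fun s hs =>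
    ((hasDerivAt_KLdiv_stepDist_pinKernel hν hμ hac (hθ0.trans_le hs.1)).const_sub _).congr_deriv
      (neg_neg _)
  have h_rate : ∀ s ∈ Set.Icc θ 1, s * ∑ T, (1 - s) ^ #T * marginalDivergence ν μ s T ≤
      C * (KLdiv ν μ - KLdiv (stepDist ν (pinKernel s)) (stepDist μ (pinKernel s))) := by
    intro s hs
    rw [← sum_one_sub_pow_card_mul_pinnedMass_log_sub, mul_sum, mul_sum]
    refine sum_le_sum fun T _ => ?_
    rw [mul_left_comm, mul_left_comm (C : ℝ)]
    exact mul_le_mul_of_nonneg_left (h_indep s (hθ0.trans_le hs.1) hs.2 T)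
      (pow_nonneg (sub_nonneg.2 hs.2) _)
  have h_growth := div_pow_le_div_pow_of_mul_hasDerivAt_le hθ0 hθ1 h_deriv h_rate
  rw [KLdiv_stepDist_pinKernel_one h_sum, sub_zero, one_pow, div_one,
    le_div_iff₀ (pow_pos hθ0 C)] at h_growth
  linarith

lemma mul_marginalDivergence_le_of_generating_function_le (hν : ∀ σ, 0 ≤ ν σ) (hμ : ∀ σ, 0 ≤ μ σ)
    (hac : ∀ σ, μ σ = 0 → ν σ = 0) (hs : 0 < s) {C : ℕ} (hC : 0 < C)
    (hgen : ∀ x : V → ℝ, (∀ i, 0 ≤ x i) →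
      ∑ σ ∈ Ici T, μ σ * s ^ #(σ \ T) * ∏ i ∈ σ \ T, x i ≤ pinnedMass μ s T * Real.exp
        ((∑ i ∈ Tᶜ, s * pinnedMass μ s (insert i T) / pinnedMass μ s T * (x i ^ C - 1)) / C)) :
    s * marginalDivergence ν μ s T ≤
      C * pinnedMass (fun σ => ν σ * (Real.log (ν σ / μ σ) - pinnedLogRatio ν μ s T)) s T := by
  have h_pow : ∀ σ : Finset V, 0 < s ^ #(σ \ T) := fun σ => pow_pos hs _
  have h_mass : ∀ ρ : Finset V → ℝ, ∑ σ ∈ Ici T, ρ σ * s ^ #(σ \ T) = pinnedMass ρ s T :=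
    fun _ => rfl
  have h_marginal : ∀ ρ : Finset V → ℝ, ∀ i ∈ Tᶜ,
      siteMarginal (Ici T) (· \ T) (fun σ => ρ σ * s ^ #(σ \ T)) i =
        s * pinnedMass ρ s (insert i T) := fun ρ i hi =>
    (mul_pinnedMass_insert (mem_compl.1 hi) ρ s).symm
  have h_entropy := sum_siteMarginal_mul_log_le_of_generating_function_le (S := Ici T) (W := Tᶜ)
    (N := (· \ T)) (a := fun σ => ν σ * s ^ #(σ \ T)) (b := fun σ => μ σ * s ^ #(σ \ T))
    (fun σ _ => sdiff_subset_sdiff (subset_univ σ) subset_rfl)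
    (fun σ _ => mul_nonneg (hν σ) (h_pow σ).le) (fun σ _ => mul_nonneg (hμ σ) (h_pow σ).le)
    (fun σ _ h => by rw [hac σ ((mul_eq_zero_iff_right (h_pow σ).ne').1 h), zero_mul]) hC
    fun x hx => by
      rw [sum_congr (s₁ := Tᶜ) rfl fun i hi => by rw [h_marginal μ i hi]]
      exact hgen x hx
  simp only [h_mass, mul_div_mul_right _ _ (h_pow _).ne'] at h_entropy
  refine le_of_eq_of_le ?_ (h_entropy.trans_eq ?_)
  · rw [marginalDivergence, mul_sum]
    refine sum_congr rfl fun i hi => ?_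
    rw [h_marginal ν i hi, h_marginal μ i hi, mul_div_mul_left _ _ hs.ne', ← pinnedLogRatio,
      ← pinnedLogRatio]
    ring
  · exact congr_arg _ (sum_congr rfl fun σ _ => mul_right_comm _ _ _)

/-! ### Entropic independence of the hardcore model -/

section Hardcore

variable {G : SimpleGraph V} {lam : V → ℝ}

omit [Fintype V] [DecidableEq V] in
lemma IsSubcritical.mul_const {Δ : ℕ} {δ : ℝ} (h : IsSubcritical G lam Δ δ) (hs0 : 0 < s)
    (hs1 : s ≤ 1) : IsSubcritical G (fun v => lam v * s) Δ δ where
  __ := h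
  pos v := mul_pos (h.pos v) hs0
  le_mul_hcCrit v := (mul_le_of_le_one_right (h.nonneg v) hs1).trans (h.le_mul_hcCrit v)

omit [DecidableEq V] in
lemma hardcore_eq_div (G : SimpleGraph V) (lam : V → ℝ) (σ : Finset V) :
    hardcore G lam σ = hcWeight G lam σ / hcPartition G lam univ := by
  rw [hardcore, hcPartition, powerset_univ]

lemma hcWeight_union (hT : IndepSet G T) {ρ : Finset V} (h_disj : Disjoint T ρ) :
    hcWeight G lam (T ∪ ρ) =
      if ρ ⊆ freeSites G univ T then (∏ v ∈ T, lam v) * hcWeight G lam ρ else 0 := by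
  have h_indep : IndepSet G (T ∪ ρ) ↔ IndepSet G ρ ∧ ρ ⊆ freeSites G univ T := by
    simp only [subset_iff, mem_freeSites, mem_univ, true_and]
    unfold IndepSet at *
    grind [G.adj_comm, disjoint_left]
  simp only [hcWeight, h_indep, prod_union h_disj]
  split_ifs <;> simp_all

lemma sum_Ici_hcWeight_mul (hT : IndepSet G T) (lam : V → ℝ) (f : Finset V → ℝ) :
    ∑ σ ∈ Ici T, hcWeight G lam σ * f (σ \ T) =
      (∏ v ∈ T, lam v) * ∑ ρ ∈ (freeSites G univ T).powerset, hcWeight G lam ρ * f ρ := by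
  have h_disj : ∀ ρ ∈ Tᶜ.powerset, Disjoint T ρ := fun ρ hρ =>
    disjoint_compl_right.mono_right (mem_powerset.1 hρ)
  have h_Ici : Ici T = Tᶜ.powerset.image (T ∪ ·) := by
    rw [compl_eq_univ_sdiff, ← Icc_eq_image_powerset (subset_univ T), ← top_eq_univ, Icc_top]
  have h_inj : Set.InjOn (T ∪ ·) (Tᶜ.powerset : Set (Finset V)) := fun ρ hρ ρ' hρ' h => by
    rw [← union_sdiff_cancel_left (h_disj ρ hρ), ← union_sdiff_cancel_left (h_disj ρ' hρ')]
    exact congr_arg (· \ T) h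
  have h_free : (freeSites G univ T).powerset = {ρ ∈ Tᶜ.powerset | ρ ⊆ freeSites G univ T} := by
    ext ρ
    simp only [mem_powerset, mem_filter, iff_and_self]
    exact fun h => h.trans fun i hi => mem_compl.2 (mem_freeSites.1 hi).2.1
  rw [h_Ici, sum_image h_inj, h_free, sum_filter, mul_sum]
  refine sum_congr rfl fun ρ hρ => ?_
  rw [union_sdiff_cancel_left (h_disj ρ hρ), hcWeight_union hT (h_disj ρ hρ), ite_mul, zero_mul,
    mul_ite, mul_zero, mul_assoc]

/-- Pinning and tilting a hardcore model leaves a hardcore model on the free sites. -/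
lemma sum_Ici_hardcore_mul_pow_mul (hT : IndepSet G T) (lam : V → ℝ) (s : ℝ)
    (f : Finset V → ℝ) :
    ∑ σ ∈ Ici T, hardcore G lam σ * s ^ #(σ \ T) * f (σ \ T) =
      (∏ v ∈ T, lam v) / hcPartition G lam univ *
        ∑ ρ ∈ (freeSites G univ T).powerset, hcWeight G (fun v => lam v * s) ρ * f ρ := by
  simp only [hcWeight_mul, prod_const, mul_assoc]
  rw [div_mul_eq_mul_div, ← sum_Ici_hcWeight_mul hT lam fun ρ => s ^ #ρ * f ρ, sum_div]
  exact sum_congr rfl fun σ _ => by rw [hardcore_eq_div, div_mul_eq_mul_div]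

lemma pinnedMass_hardcore (hT : IndepSet G T) (lam : V → ℝ) (s : ℝ) :
    pinnedMass (hardcore G lam) s T = (∏ v ∈ T, lam v) / hcPartition G lam univ *
      hcPartition G (fun v => lam v * s) (freeSites G univ T) := by
  simpa only [mul_one, pinnedMass, hcPartition] using
    sum_Ici_hardcore_mul_pow_mul hT lam s fun _ => 1

variable (hlam : ∀ v, 0 < lam v)
include hlam

lemma mul_pinnedMass_hardcore_insert_div (hT : IndepSet G T) {i : V} (hi : i ∉ T) (s : ℝ) :
    s * pinnedMass (hardcore G lam) s (insert i T) / pinnedMass (hardcore G lam) s T =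
      occ G (fun v => lam v * s) (freeSites G univ T) i := by
  have h_const : (∏ v ∈ T, lam v) / hcPartition G lam univ ≠ 0 :=
    (div_pos (prod_pos fun v _ => hlam v) (hcPartition_pos G (fun v => (hlam v).le) univ)).ne'
  have h_marginal : siteMarginal (Ici T) (· \ T) (fun σ => hardcore G lam σ * s ^ #(σ \ T)) i =
      ∑ σ ∈ Ici T, hardcore G lam σ * s ^ #(σ \ T) * occupied i (σ \ T) := by
    simp only [siteMarginal, sum_filter, occupied, mul_ite, mul_one, mul_zero]
  rw [mul_pinnedMass_insert hi, h_marginal, sum_Ici_hardcore_mul_pow_mul hT,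
    pinnedMass_hardcore hT, mul_div_mul_left _ _ h_const]
  rfl

omit [DecidableEq V] in
lemma hardcore_nonneg (σ : Finset V) : 0 ≤ hardcore G lam σ :=
  div_nonneg (hcWeight_nonneg G (fun v => (hlam v).le) σ)
    (sum_nonneg fun τ _ => hcWeight_nonneg G (fun v => (hlam v).le) τ)

omit [DecidableEq V] in
lemma sum_hardcore : ∑ σ, hardcore G lam σ = 1 := by
  have h_pos := hcPartition_pos G (fun v => (hlam v).le) univ
  simp only [hardcore_eq_div, ← sum_div]
  rw [← powerset_univ, ← hcPartition, div_self h_pos.ne']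

omit [DecidableEq V] in
lemma hardcore_eq_zero_iff {σ : Finset V} : hardcore G lam σ = 0 ↔ ¬ IndepSet G σ := by
  have h_prod : ∏ v ∈ σ, lam v ≠ 0 := (prod_pos fun v _ => hlam v).ne'
  have h_pos := hcPartition_pos G (fun v => (hlam v).le) univ
  rw [hardcore_eq_div, div_eq_zero_iff, or_iff_left h_pos.ne', hcWeight]
  split_ifs with h <;> simp [h, h_prod]

omit hlam

lemma IsSubcritical.sum_Ici_hardcore_mul_prod_le {Δ : ℕ} {δ : ℝ} (h : IsSubcritical G lam Δ δ)
    (hs0 : 0 < s) (hs1 : s ≤ 1) {x : V → ℝ} (hx : ∀ i, 0 ≤ x i) :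
    ∑ σ ∈ Ici T, hardcore G lam σ * s ^ #(σ \ T) * ∏ i ∈ σ \ T, x i ≤
      pinnedMass (hardcore G lam) s T * Real.exp ((∑ i ∈ Tᶜ,
        s * pinnedMass (hardcore G lam) s (insert i T) / pinnedMass (hardcore G lam) s T *
          (x i ^ entropicExponent δ - 1)) / entropicExponent δ) := by
  by_cases hT : IndepSet G T
  · have h_free : ∑ i ∈ Tᶜ, s * pinnedMass (hardcore G lam) s (insert i T) /
          pinnedMass (hardcore G lam) s T * (x i ^ entropicExponent δ - 1) =
        ∑ i ∈ freeSites G univ T, occ G (fun v => lam v * s) (freeSites G univ T) i *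
          (x i ^ entropicExponent δ - 1) := by
      rw [sum_congr rfl fun i hi => by
        rw [mul_pinnedMass_hardcore_insert_div h.pos hT (mem_compl.1 hi)]]
      refine (sum_subset (fun i hi => mem_compl.2 (mem_freeSites.1 hi).2.1) fun i _ hi => ?_).symm
      rw [occ_of_notMem G _ hi, zero_mul]
    rw [h_free, pinnedMass_hardcore hT, sum_Ici_hardcore_mul_pow_mul hT _ _ fun ρ => ∏ i ∈ ρ, x i,
      mul_assoc]
    simp only [← hcWeight_mul]
    exact mul_le_mul_of_nonneg_left ((h.mul_const hs0 hs1).hcPartition_mul_le _ hx)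
      (div_nonneg (prod_nonneg fun v _ => h.nonneg v) (hcPartition_pos G h.nonneg univ).le)
  · have h_null : ∀ σ ∈ Ici T, hardcore G lam σ = 0 := fun σ hσ =>
      (hardcore_eq_zero_iff h.pos).2 fun hσ_indep =>
        hT fun u hu w hw => hσ_indep u (mem_Ici.1 hσ hu) w (mem_Ici.1 hσ hw)
    have h_mass : pinnedMass (hardcore G lam) s T = 0 :=
      (pinnedMass_eq_zero_iff (hardcore_nonneg h.pos) hs0).2 fun σ hσ => h_null σ (mem_Ici.2 hσ)
    rw [h_mass, zero_mul, sum_eq_zero fun σ hσ => by rw [h_null σ hσ, zero_mul, zero_mul]]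

lemma IsSubcritical.KLdiv_stepDist_pinKernel_le {Δ : ℕ} {δ : ℝ} (h : IsSubcritical G lam Δ δ)
    (hν : ∀ σ, 0 ≤ ν σ) (hν_sum : ∑ σ, ν σ = 1) (hac : ∀ σ, hardcore G lam σ = 0 → ν σ = 0)
    {θ : ℝ} (hθ0 : 0 < θ) (hθ1 : θ ≤ 1) :
    KLdiv (stepDist ν (pinKernel θ)) (stepDist (hardcore G lam) (pinKernel θ)) ≤
      (1 - θ ^ entropicExponent δ) * KLdiv ν (hardcore G lam) :=
  _root_.KLdiv_stepDist_pinKernel_le hν (hardcore_nonneg h.pos) hac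
    (hν_sum.trans (sum_hardcore h.pos).symm) (fun _ hs0 hs1 _ =>
      mul_marginalDivergence_le_of_generating_function_le hν (hardcore_nonneg h.pos) hac hs0
        (entropicExponent_pos h.slack_mem_Ioo.1) fun _ hx =>
          h.sum_Ici_hardcore_mul_prod_le hs0 hs1 hx) hθ0 hθ1

end Hardcore

/-! ### Systematic scan and field dynamics -/

/-- The deterministic kernel which removes the site `v` from the configuration. -/
def eraseKernel (v : V) (σ ρ : Finset V) : ℝ :=
  if ρ = σ.erase v then 1 else 0

omit [Fintype V] in
lemma eraseKernel_nonneg (v : V) (σ ρ : Finset V) : 0 ≤ eraseKernel v σ ρ := by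
  unfold eraseKernel
  split_ifs
  exacts [zero_le_one, le_rfl]

lemma sum_eraseKernel (v : V) (σ : Finset V) : ∑ ρ, eraseKernel v σ ρ = 1 := by
  simp [eraseKernel]

lemma stepDist_eraseKernel (μ : Finset V → ℝ) (v : V) (σ : Finset V) :
    stepDist μ (eraseKernel v) (σ.erase v) = μ (insert v (σ.erase v)) + μ (σ.erase v) := by
  have h_fiber : ({τ | σ.erase v = τ.erase v} : Finset (Finset V)) =
      {insert v (σ.erase v), σ.erase v} := by
    ext τ
    simp only [mem_filter, mem_univ, true_and, mem_insert, mem_singleton]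
    grind
  simp only [stepDist, eraseKernel, mul_ite, mul_one, mul_zero, ← sum_filter]
  rw [h_fiber, sum_pair (insert_ne_self.2 (notMem_erase v σ))]

lemma siteUpdate_eq_resampleKernel (μ : Finset V → ℝ) (v : V) :
    siteUpdate μ v = resampleKernel μ (eraseKernel v) := by
  funext σ τ
  have h_erase : resampleKernel μ (eraseKernel v) σ τ =
      posterior μ (eraseKernel v) (σ.erase v) τ := by
    simp [resampleKernel, stepDist, eraseKernel]
  rw [h_erase, posterior, stepDist_eraseKernel, siteUpdate, eraseKernel]
  simp only [eq_comm (a := τ.erase v), mul_ite, mul_one, mul_zero, ite_div, zero_div]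

section Scan

variable (hμ : ∀ σ, 0 ≤ μ σ) (hν : IsAbsContLaw ν μ)
include hμ hν

lemma isAbsContLaw_stepDist_siteUpdate (v : V) : IsAbsContLaw (stepDist ν (siteUpdate μ v)) μ := by
  rw [siteUpdate_eq_resampleKernel]
  exact isAbsContLaw_stepDist_resampleKernel hμ (eraseKernel_nonneg v) (sum_eraseKernel v) hν

lemma KLdiv_stepDist_siteUpdate_le (v : V) :
    KLdiv (stepDist ν (siteUpdate μ v)) μ ≤ KLdiv ν μ := by
  rw [siteUpdate_eq_resampleKernel]
  exact (KLdiv_stepDist_resampleKernel_le hμ (eraseKernel_nonneg v) (sum_eraseKernel v) hν).trans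
    (KLdiv_stepDist_le hν.nonneg hμ hν.eq_zero_of_eq_zero (eraseKernel_nonneg v)
      fun σ _ => sum_eraseKernel v σ)

lemma isAbsContLaw_scanDist (l : List V) : IsAbsContLaw (scanDist μ l ν) μ :=
  List.foldlRecOn (motive := (IsAbsContLaw · μ)) l _ hν fun _ hρ v _ =>
    isAbsContLaw_stepDist_siteUpdate hμ hρ v

lemma KLdiv_scanDist_le (l : List V) : KLdiv (scanDist μ l ν) μ ≤ KLdiv ν μ := by
  induction l generalizing ν with
  | nil => exact le_rfl
  | cons v l ih =>
    exact (ih (isAbsContLaw_stepDist_siteUpdate hμ hν v)).trans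
      (KLdiv_stepDist_siteUpdate_le hμ hν v)

end Scan

omit [Fintype V] in
lemma pinKernel_nonneg (hs0 : 0 ≤ s) (hs1 : s ≤ 1) (σ T : Finset V) : 0 ≤ pinKernel s σ T := by
  unfold pinKernel
  split_ifs
  exacts [mul_nonneg (pow_nonneg hs0 _) (pow_nonneg (sub_nonneg.2 hs1) _), le_rfl]

lemma sum_superset_hcTiltWeight (s : ℝ) (μ : Finset V → ℝ) (T : Finset V) :
    ∑ τ with T ⊆ τ, hcTiltWeight s μ τ = s ^ #T * pinnedMass μ s T := by
  have h_Ici : ({τ | T ⊆ τ} : Finset (Finset V)) = Ici T := by ext τ; simp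
  rw [h_Ici, pinnedMass, mul_sum]
  refine sum_congr rfl fun τ hτ => ?_
  rw [hcTiltWeight, ← card_sdiff_add_card_eq_card (mem_Ici.1 hτ), pow_add]
  ring

lemma posterior_pinKernel (hs0 : s ≠ 0) (hs1 : s ≠ 1) (μ : Finset V → ℝ) (T σ : Finset V) :
    posterior μ (pinKernel s) T σ = (if T ⊆ σ then hcTiltWeight s μ σ else 0) /
      ∑ τ with T ⊆ τ, hcTiltWeight s μ τ := by
  rw [posterior, stepDist_pinKernel, sum_superset_hcTiltWeight, pinKernel]
  split_ifs with h
  · have h_pow : (1 - s) ^ #T ≠ 0 := pow_ne_zero _ (sub_ne_zero.2 hs1.symm)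
    calc μ σ * (s ^ #(σ \ T) * (1 - s) ^ #T) / ((1 - s) ^ #T * pinnedMass μ s T)
        = (1 - s) ^ #T * (μ σ * s ^ #(σ \ T)) / ((1 - s) ^ #T * pinnedMass μ s T) := by ring
      _ = s ^ #T * (μ σ * s ^ #(σ \ T)) / (s ^ #T * pinnedMass μ s T) := by
        rw [mul_div_mul_left _ _ h_pow, mul_div_mul_left _ _ (pow_ne_zero _ hs0)]
      _ = hcTiltWeight s μ σ / (s ^ #T * pinnedMass μ s T) := by
        rw [hcTiltWeight, ← card_sdiff_add_card_eq_card h, pow_add]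
        ring
  · rw [mul_zero, zero_div, zero_div]

lemma fieldDyn_eq_resampleKernel (hs0 : s ≠ 0) (hs1 : s ≠ 1) (μ : Finset V → ℝ) :
    fieldDyn s μ = resampleKernel μ (pinKernel s) := by
  funext σ σ'
  rw [resampleKernel, stepDist, fieldDyn]
  -- the set `S` of resampled sites is the complement of the set of pinned sites
  refine Fintype.sum_equiv (compl_involutive.toPerm compl) _ _ fun S => ?_
  have h_subset : σᶜ ⊆ S ↔ Sᶜ ⊆ σ := compl_le_iff_compl_le
  have h_pinned : Sᶜ ⊆ σ → σ \ S = Sᶜ := fun h => by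
    rw [sdiff_eq, inf_eq_right.2 h]
  have h_inter : σ \ Sᶜ = S ∩ σ := by
    rw [sdiff_compl, inf_eq_inter, inter_comm]
  simp only [Function.Involutive.coe_toPerm, posterior_pinKernel hs0 hs1, pinKernel,
    ← compl_eq_univ_sdiff, h_subset, h_inter]
  by_cases h_pin : Sᶜ ⊆ σ
  · rw [if_pos h_pin, if_pos h_pin, h_pinned h_pin]
  · rw [if_neg h_pin, if_neg h_pin, zero_mul]

lemma IsSubcritical.KLdiv_stepDist_fieldDyn_le {G : SimpleGraph V} {lam : V → ℝ} {Δ : ℕ} {δ : ℝ}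
    (h : IsSubcritical G lam Δ δ) (hν : IsAbsContLaw ν (hardcore G lam)) {θ : ℝ}
    (hθ : θ ∈ Set.Ioo (0 : ℝ) 1) :
    KLdiv (stepDist ν (fieldDyn θ (hardcore G lam))) (hardcore G lam) ≤
      (1 - θ ^ entropicExponent δ) * KLdiv ν (hardcore G lam) := by
  rw [fieldDyn_eq_resampleKernel hθ.1.ne' hθ.2.ne]
  exact (KLdiv_stepDist_resampleKernel_le (hardcore_nonneg h.pos)
    (pinKernel_nonneg hθ.1.le hθ.2.le) (sum_pinKernel θ) hν).trans
    (h.KLdiv_stepDist_pinKernel_le hν.nonneg hν.sum_eq_one hν.eq_zero_of_eq_zero hθ.1 hθ.2.le)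

theorem scan_field_dynamics_entropy_contraction_general {δ θ : ℝ} (hδ : δ ∈ Set.Ioo (0 : ℝ) 1)
    (hθ : θ ∈ Set.Ioo (0 : ℝ) 1) :
    ∃ κ : ℝ, κ ∈ Set.Ioo (0 : ℝ) 1 ∧
      ∀ (V : Type*) [Fintype V] [DecidableEq V] (G : SimpleGraph V) [G.LocallyFinite] (Δ : ℕ),
        3 ≤ Δ → (∀ v, G.degree v ≤ Δ) →
        ∀ lam : V → ℝ, (∀ v, 0 < lam v) → (∀ v, lam v ≤ (1 - δ) * hcCrit Δ) →
        ∀ (l : List V) (ν : Finset V → ℝ), (∀ σ, 0 ≤ ν σ) → ∑ σ, ν σ = 1 →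
          (∀ σ, ¬ IndepSet G σ → ν σ = 0) →
          KLdiv (stepDist (scanDist (hardcore G lam) l ν) (fieldDyn θ (hardcore G lam)))
              (hardcore G lam) ≤
            (1 - κ) * KLdiv ν (hardcore G lam) := by
  have h_rate : θ ^ entropicExponent δ < 1 :=
    pow_lt_one₀ hθ.1.le hθ.2 (entropicExponent_pos hδ.1).ne'
  refine ⟨θ ^ entropicExponent δ, ⟨pow_pos hθ.1 _, h_rate⟩, ?_⟩
  intro V _ _ G _ Δ hΔ hdeg lam hpos hle l ν hν hν_sum hν_indep
  have h_sub : IsSubcritical G lam Δ δ :=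
    ⟨hΔ, fun U v => card_neighborsIn_le_degree.trans (hdeg v), hδ, hpos, hle⟩
  have h_nonneg := hardcore_nonneg (G := G) hpos
  have h_law : IsAbsContLaw ν (hardcore G lam) :=
    ⟨hν, hν_sum, fun σ hσ => hν_indep σ ((hardcore_eq_zero_iff hpos).1 hσ)⟩
  calc KLdiv (stepDist (scanDist (hardcore G lam) l ν) (fieldDyn θ (hardcore G lam)))
        (hardcore G lam)
      ≤ (1 - θ ^ entropicExponent δ) * KLdiv (scanDist (hardcore G lam) l ν) (hardcore G lam) :=
        h_sub.KLdiv_stepDist_fieldDyn_le (isAbsContLaw_scanDist h_nonneg h_law l) hθ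
    _ ≤ (1 - θ ^ entropicExponent δ) * KLdiv ν (hardcore G lam) :=
        mul_le_mul_of_nonneg_left (KLdiv_scanDist_le h_nonneg h_law l) (sub_nonneg.2 h_rate.le)

/-- Restricted entropy contraction for one pass of the systematic
scan followed by one step of the field dynamics at `θ = 1/10`, for `δ`-unique
hardcore models, uniformly over starting distributions supported on independent
sets. -/
theorem scan_field_dynamics_entropy_contraction :
    ∀ δ : ℝ, δ ∈ Set.Ioo (0 : ℝ) 1 →
    ∃ κ : ℝ, κ ∈ Set.Ioo (0 : ℝ) 1 ∧
      ∀ (V : Type) [Fintype V] [DecidableEq V] (G : SimpleGraph V)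
        [DecidableRel G.Adj] (Δ : ℕ), 3 ≤ Δ →
        (∀ v : V, G.degree v ≤ Δ) →
        ∀ lam : V → ℝ, (∀ v, 0 < lam v) → (∀ v, lam v ≤ (1 - δ) * hcCrit Δ) →
        ∀ l : List V, l.Nodup → (∀ v : V, v ∈ l) →
        ∀ ν : Finset V → ℝ, (∀ σ, 0 ≤ ν σ) → (∑ σ : Finset V, ν σ) = 1 →
          (∀ σ, ¬ IndepSet G σ → ν σ = 0) →
          KLdiv
              (stepDist (scanDist (hardcore G lam) l ν)
                (fieldDyn (1 / 10) (hardcore G lam)))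
              (hardcore G lam) ≤
            (1 - κ) * KLdiv ν (hardcore G lam) := by
  intro δ hδ
  obtain ⟨κ, hκ, h⟩ :=
    scan_field_dynamics_entropy_contraction_general (θ := 1 / 10) hδ (by norm_num)
  exact ⟨κ, hκ, fun V _ _ G _ Δ hΔ hdeg lam hpos hle l _ _ => h V G Δ hΔ hdeg lam hpos hle l⟩
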